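/- arXiv:math/0209133 — 2 statements merged into one kernel-verified Lean document; each statement's English description precedes it below -/
import Mathlib

section
/- An element f = Σ_{w∈M} γ(w) w of F belongs to 𝒰 if and only if for all i ≠ j and all words z, t ∈ M one has Σ_{k=0}^{1−a_{ij}} (−1)^k [1−a_{ij} choose k]_i · γ(z · w_i^k w_j w_i^{1−a_{ij}−k} · t) = 0, where z · w_i^k w_j w_i^{1−a_{ij}−k} · t denotes the concatenated word. -/
open scoped BigOperators

noncomputable section

/-- The field `ℚ(q)` of rational functions over `ℚ`. -/
abbrev K : Type := RatFunc ℚ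

/-- The indeterminate `q`. -/
abbrev qq : K := RatFunc.X

/-- Words on the alphabet `{w_1, …, w_r}` (the free monoid `M`). -/
abbrev Word (r : ℕ) := List (Fin r)

/-- The space `F` with basis the words, as finitely supported families of coefficients. -/
abbrev FA (r : ℕ) := Word r →₀ K

variable {r : ℕ}

/-- `(|w|, |x|)` : the symmetric bilinear form evaluated on the degrees of two words,
where `p i j = (α_i, α_j)` is the form on simple roots. -/
def pairW (p : Fin r → Fin r → ℤ) (w x : Word r) : ℤ :=
  (w.map fun i => (x.map fun j => p i j).sum).sum

/-- Auxiliary q-shuffle on *reversed* words: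
`shAux p w x` is the q-shuffle of `w.reverse` and `x.reverse`; it implements the recursion
`(w·a) * (x·b) = (w * (x·b))·a + q^{-(|w·a|,|b|)} ((w·a) * x)·b`, `w[] * x = x * w[] = x`. -/
def shAux (p : Fin r → Fin r → ℤ) : Word r → Word r → FA r
  | [], x => Finsupp.single x.reverse 1
  | w, [] => Finsupp.single w.reverse 1
  | a :: w, b :: x =>
      Finsupp.mapDomain (fun u => u ++ [a]) (shAux p w (b :: x))
      + (qq ^ (-(pairW p (a :: w) [b]))) •
          Finsupp.mapDomain (fun u => u ++ [b]) (shAux p (a :: w) x)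
  termination_by w x => w.length + x.length
  decreasing_by all_goals (first | (simp only [List.length_cons]; omega) | omega)

/-- The q-shuffle product `*` on `F`, extended bilinearly from words. -/
def shuffle (p : Fin r → Fin r → ℤ) (f g : FA r) : FA r :=
  f.sum fun w c => g.sum fun x d => (c * d) • shAux p w.reverse x.reverse

/-- Membership in `𝒰`, the `ℚ(q)`-subalgebra of `(F, *)` generated by the letters `w_i`. -/
inductive InU (p : Fin r → Fin r → ℤ) : FA r → Prop
  | letter (i : Fin r) : InU p (Finsupp.single [i] 1)
  | one : InU p (Finsupp.single ([] : Word r) 1)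
  | add : ∀ {f g : FA r}, InU p f → InU p g → InU p (f + g)
  | smul : ∀ (c : K) {f : FA r}, InU p f → InU p (c • f)
  | mul : ∀ {f g : FA r}, InU p f → InU p g → InU p (shuffle p f g)

/-- The q-integer `[n]_i = (q_i^n − q_i^{−n})/(q_i − q_i^{−1})` with `q_i = q^{d_i}`. -/
def qInt (di : ℤ) (n : ℤ) : K :=
  (qq ^ (di * n) - qq ^ (-(di * n))) / (qq ^ di - qq ^ (-di))

/-- The q-binomial coefficient `[m choose k]_i = [m]_i⋯[m−k+1]_i / ([k]_i⋯[1]_i)`. -/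
def qBinom (di : ℤ) (m k : ℕ) : K :=
  (∏ t ∈ Finset.range k, qInt di ((m : ℤ) - t)) / (∏ t ∈ Finset.range k, qInt di ((t : ℤ) + 1))

/-- The data of the Cartan matrix `[a_{ij}]` of a finite-dimensional complex simple
Lie algebra of rank `r`: an integral matrix with `2` on the diagonal and nonpositive
off-diagonal entries, symmetrizable by `d_i ∈ {1,2,3}`, whose symmetrization
`(α_i, α_j) = d_i a_{ij}` is positive definite, and which is indecomposable. -/
structure CartanData (r : ℕ) where
  a : Fin r → Fin r → ℤ
  d : Fin r → ℤ
  diag : ∀ i, a i i = 2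
  offdiag : ∀ i j, i ≠ j → a i j ≤ 0
  dval : ∀ i, d i = 1 ∨ d i = 2 ∨ d i = 3
  dsymm : ∀ i j, d i * a i j = d j * a j i
  posdef : ∀ v : Fin r → ℚ, v ≠ 0 → 0 < ∑ i, ∑ j, v i * v j * ((d i * a i j : ℤ) : ℚ)
  indec : ∀ s : Finset (Fin r), s.Nonempty → s ≠ Finset.univ →
    ∃ i ∈ s, ∃ j, j ∉ s ∧ a i j ≠ 0

/-- The symmetric bilinear form `(α_i, α_j) = d_i a_{ij}` on simple roots. -/
def CartanData.p (C : CartanData r) : Fin r → Fin r → ℤ := fun i j => C.d i * C.a i j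

/-!
Pair the free algebra on generators `ι i` with `F` so that products of generators are dual to words.
Under this pairing, `q`-shuffling a letter `w_i` from the left or from the right is transpose to a
skew derivation `R_i` or `L_i` of the free algebra, so that the annihilator of `𝒰` is stable under
all of these derivations. They kill the quantum Serre elements, hence the ideal `J` generated by
these elements annihilates `𝒰`.

Conversely, let `x` of degree `ν ≠ 0` annihilate `𝒰`. By positive definiteness some simple root
`α_i` occurring in `ν` has `(ν, α_i) > 0`, and by induction on the degree `L_i x` and `R_i x` lie in
`J`. Because `L_i x ∈ J`, and the Serre relations hold modulo `J`, the `q`-adjoint operator `F_i`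
acts nilpotently on `x` modulo `J`; because `R_i x ∈ J`, the derivation `R_i` maps `F_i ^ (n + 1) x`
to a multiple of `F_i ^ n x` modulo `J`, with a factor that is nonzero since `(ν, α_i) > 0`.
Descending in `n` gives `x ∈ J`. So `f` belongs to `𝒰` if and only if it is orthogonal to `J`, and
orthogonality to `z * (Serre element) * t` is the relation displayed in the theorem.
-/

open FreeAlgebra (ι)
open Filter

section SkewDerivations

variable {k X A : Type*} [CommRing k] [Ring A] [Algebra k A]

/-- The algebra homomorphism into `2 × 2` matrices with diagonal `τ`, `σ` and upper right entry
prescribed on generators; it is upper triangular, and its upper right entry is a skew derivation. -/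
def skewDerivHom (σ τ : FreeAlgebra k X →ₐ[k] A) (δ : X → A) :
    FreeAlgebra k X →ₐ[k] Matrix (Fin 2) (Fin 2) A :=
  FreeAlgebra.lift k fun j => !![τ (ι k j), δ j; 0, σ (ι k j)]

/-- The `(σ, τ)`-skew derivation `D` of the free algebra with `D (ι j) = δ j`, normalised by
`D (x * y) = D x * σ y + τ x * D y`. -/
def skewDeriv (σ τ : FreeAlgebra k X →ₐ[k] A) (δ : X → A) : FreeAlgebra k X →ₗ[k] A :=
  Matrix.entryLinearMap k A 0 1 ∘ₗ (skewDerivHom σ τ δ).toLinearMap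

variable (σ τ : FreeAlgebra k X →ₐ[k] A) (δ : X → A)

lemma skewDerivHom_apply_diag (x : FreeAlgebra k X) :
    skewDerivHom σ τ δ x 0 0 = τ x ∧ skewDerivHom σ τ δ x 1 1 = σ x ∧
      skewDerivHom σ τ δ x 1 0 = 0 := by
  induction x using FreeAlgebra.induction with
  | grade0 a => simp only [AlgHom.commutes, Matrix.algebraMap_matrix_apply]; simp
  | grade1 j => simp [skewDerivHom]
  | mul x y hx hy => simp [Matrix.mul_apply, hx, hy]
  | add x y hx hy => simp [hx, hy]

@[simp]
lemma skewDeriv_ι (j : X) : skewDeriv σ τ δ (ι k j) = δ j := by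
  simp [skewDeriv, skewDerivHom]

lemma skewDeriv_mul (x y : FreeAlgebra k X) :
    skewDeriv σ τ δ (x * y) = skewDeriv σ τ δ x * σ y + τ x * skewDeriv σ τ δ y := by
  simp [skewDeriv, Matrix.mul_apply, skewDerivHom_apply_diag, add_comm]

@[simp]
lemma skewDeriv_one : skewDeriv σ τ δ 1 = 0 := by
  simpa using skewDeriv_mul σ τ δ 1 1

variable {σ τ δ} in
lemma eq_skewDeriv {D : FreeAlgebra k X →ₗ[k] A} (hι : ∀ j, D (ι k j) = δ j)
    (hmul : ∀ x y, D (x * y) = D x * σ y + τ x * D y) : D = skewDeriv σ τ δ := by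
  have hone : D 1 = 0 := by simpa using hmul 1 1
  ext x
  induction x using FreeAlgebra.induction with
  | grade0 a => simp [Algebra.algebraMap_eq_smul_one, hone]
  | grade1 j => simp [hι]
  | mul x y hx hy => rw [hmul, skewDeriv_mul, hx, hy]
  | add x y hx hy => rw [map_add, map_add, hx, hy]

lemma skewDeriv_comp_algHom {σ τ φ : FreeAlgebra k X →ₐ[k] FreeAlgebra k X}
    {δ : X → FreeAlgebra k X} {a : k} (hσ : ∀ x, σ (φ x) = φ (σ x))
    (hτ : ∀ x, τ (φ x) = φ (τ x)) (hι : ∀ j, skewDeriv σ τ δ (φ (ι k j)) = a • φ (δ j))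
    (x : FreeAlgebra k X) : skewDeriv σ τ δ (φ x) = a • φ (skewDeriv σ τ δ x) := by
  have hcomp : skewDeriv σ τ δ ∘ₗ φ.toLinearMap =
      skewDeriv (σ.comp φ) (τ.comp φ) fun j => a • φ (δ j) :=
    eq_skewDeriv hι fun x y => by simp [skewDeriv_mul]
  have hsmul : a • φ.toLinearMap ∘ₗ skewDeriv σ τ δ =
      skewDeriv (σ.comp φ) (τ.comp φ) fun j => a • φ (δ j) :=
    eq_skewDeriv (by simp) fun x y => by simp [skewDeriv_mul, hσ, hτ]
  exact DFunLike.congr_fun (hcomp.trans hsmul.symm) x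

lemma skewDeriv_mem_span {σ τ : FreeAlgebra k X →ₐ[k] FreeAlgebra k X}
    {δ : X → FreeAlgebra k X} {s : Set (FreeAlgebra k X)}
    (hσ : ∀ x ∈ TwoSidedIdeal.span s, σ x ∈ TwoSidedIdeal.span s)
    (hτ : ∀ x ∈ TwoSidedIdeal.span s, τ x ∈ TwoSidedIdeal.span s)
    (hs : ∀ x ∈ s, skewDeriv σ τ δ x ∈ TwoSidedIdeal.span s) {x : FreeAlgebra k X}
    (hx : x ∈ TwoSidedIdeal.span s) : skewDeriv σ τ δ x ∈ TwoSidedIdeal.span s := by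
  induction hx using TwoSidedIdeal.span_induction with
  | mem x hx => exact hs x hx
  | zero => simp
  | add x y _ _ hx hy => rw [map_add]; exact add_mem hx hy
  | neg x _ hx => rw [map_neg]; exact neg_mem hx
  | left_absorb a x hx' hx =>
    rw [skewDeriv_mul]
    exact add_mem (TwoSidedIdeal.mul_mem_left _ _ _ (hσ x hx'))
      (TwoSidedIdeal.mul_mem_left _ _ _ hx)
  | right_absorb b x hx' hx =>
    rw [skewDeriv_mul]
    exact add_mem (TwoSidedIdeal.mul_mem_right _ _ _ hx)
      (TwoSidedIdeal.mul_mem_right _ _ _ (hτ x hx'))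

end SkewDerivations

lemma smul_mem_twoSidedIdeal {k A : Type*} [CommRing k] [Ring A] [Algebra k A]
    (J : TwoSidedIdeal A) (a : k) {x : A} (hx : x ∈ J) : a • x ∈ J := by
  rw [Algebra.smul_def]
  exact J.mul_mem_left _ _ hx

lemma smul_mem_twoSidedIdeal_iff {k A : Type*} [Field k] [Ring A] [Algebra k A]
    (J : TwoSidedIdeal A) {a : k} (ha : a ≠ 0) {x : A} : a • x ∈ J ↔ x ∈ J :=
  ⟨fun h => by simpa [smul_smul, ha] using smul_mem_twoSidedIdeal J a⁻¹ h,
    smul_mem_twoSidedIdeal J a⟩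

section QAdjoint

variable {k X : Type*} [CommRing k] (c : X → X → k)

/-- The diagonal endomorphism `K_i : ι j ↦ c i j • ι j` attached to a matrix `c` of scalars. -/
def diagHom (i : X) : FreeAlgebra k X →ₐ[k] FreeAlgebra k X :=
  FreeAlgebra.lift k fun j => c i j • ι k j

/-- The `q`-adjoint action `F_i : y ↦ y * ι i - ι i * K_i y` of a generator. -/
def qAd (i : X) : Module.End k (FreeAlgebra k X) :=
  LinearMap.mulRight k (ι k i) - LinearMap.mulLeft k (ι k i) ∘ₗ (diagHom c i).toLinearMap

/-- The `q`-Serre element `F_i ^ n (ι j)`. -/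
def serreElt (i j : X) (n : ℕ) : FreeAlgebra k X := (qAd c i ^ n) (ι k j)

@[simp]
lemma diagHom_ι (i j : X) : diagHom c i (ι k j) = c i j • ι k j := by
  simp [diagHom]

lemma diagHom_comm (i j : X) (x : FreeAlgebra k X) :
    diagHom c i (diagHom c j x) = diagHom c j (diagHom c i x) := by
  suffices h : (diagHom c i).comp (diagHom c j) = (diagHom c j).comp (diagHom c i) from
    DFunLike.congr_fun h x
  ext l
  simp [smul_smul, mul_comm]

lemma qAd_apply (i : X) (y : FreeAlgebra k X) :
    qAd c i y = y * ι k i - ι k i * diagHom c i y := rfl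

lemma qAd_pow_succ_apply (i : X) (n : ℕ) (y : FreeAlgebra k X) :
    (qAd c i ^ (n + 1)) y = qAd c i ((qAd c i ^ n) y) := by
  rw [pow_succ', Module.End.mul_apply]

@[simp]
lemma qAd_one (i : X) : qAd c i 1 = 0 := by simp [qAd_apply]

lemma qAd_mul (i : X) (y z : FreeAlgebra k X) :
    qAd c i (y * z) = y * qAd c i z + qAd c i y * diagHom c i z := by
  simp only [qAd_apply, map_mul]
  noncomm_ring

lemma diagHom_qAd (l i : X) (y : FreeAlgebra k X) :
    diagHom c l (qAd c i y) = c l i • qAd c i (diagHom c l y) := by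
  simp only [qAd_apply, map_sub, map_mul, diagHom_ι, smul_sub, smul_mul_assoc, mul_smul_comm,
    diagHom_comm c l i]

lemma diagHom_qAd_pow (l i : X) (n : ℕ) (y : FreeAlgebra k X) :
    diagHom c l ((qAd c i ^ n) y) = c l i ^ n • (qAd c i ^ n) (diagHom c l y) := by
  induction n with
  | zero => simp
  | succ n ih =>
    rw [qAd_pow_succ_apply, diagHom_qAd, ih, map_smul, smul_smul, ← pow_succ', qAd_pow_succ_apply]

lemma diagHom_serreElt (l i j : X) (n : ℕ) :
    diagHom c l (serreElt c i j n) = (c l i ^ n * c l j) • serreElt c i j n := by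
  rw [serreElt, diagHom_qAd_pow, diagHom_ι, map_smul, smul_smul]

lemma serreElt_zero (i j : X) : serreElt c i j 0 = ι k j := rfl

lemma serreElt_succ (i j : X) (n : ℕ) : serreElt c i j (n + 1) = qAd c i (serreElt c i j n) :=
  qAd_pow_succ_apply c i n _

lemma qAd_pow_mul_ι_mul_pow (i j : X) (l e : ℕ) :
    qAd c i (ι k i ^ l * ι k j * ι k i ^ e) = ι k i ^ l * ι k j * ι k i ^ (e + 1) -
      (c i i ^ (l + e) * c i j) • (ι k i ^ (l + 1) * ι k j * ι k i ^ e) := by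
  simp only [qAd_apply, map_mul, map_pow, diagHom_ι, smul_pow, smul_mul_assoc, mul_smul_comm,
    smul_smul, mul_assoc, ← pow_succ]
  rw [← mul_assoc (ι k i) (ι k i ^ l), ← pow_succ']
  congr 2
  ring

lemma serreElt_eq_sum (i j : X) {b : ℕ → ℕ → k} (hzero : ∀ n, b n 0 = 1)
    (hself : ∀ n, b n (n + 1) = 0)
    (hsucc : ∀ n l, b (n + 1) (l + 1) = b n (l + 1) - c i i ^ n * c i j * b n l) (n : ℕ) :
    serreElt c i j n =
      ∑ l ∈ Finset.range (n + 1), b n l • (ι k i ^ l * ι k j * ι k i ^ (n - l)) := by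
  induction n with
  | zero => simp [serreElt_zero, hzero]
  | succ n ih =>
    have hstep : ∀ l ∈ Finset.range (n + 1),
        qAd c i (b n l • (ι k i ^ l * ι k j * ι k i ^ (n - l))) =
          b n l • (ι k i ^ l * ι k j * ι k i ^ (n + 1 - l)) -
            (c i i ^ n * c i j * b n l) • (ι k i ^ (l + 1) * ι k j * ι k i ^ (n - l)) := by
      intro l hl
      have hln : l ≤ n := Finset.mem_range_succ_iff.1 hl
      rw [map_smul, qAd_pow_mul_ι_mul_pow, Nat.add_sub_cancel' hln, ← Nat.sub_add_comm hln,
        smul_sub, smul_smul, mul_comm (b n l)]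
    rw [serreElt_succ, ih, map_sum, Finset.sum_congr rfl hstep, Finset.sum_sub_distrib,
      Finset.sum_range_succ' _ (n + 1), Finset.sum_range_succ' (fun l => b n l • _) n]
    simp only [hsucc, sub_smul, Finset.sum_sub_distrib, Nat.add_sub_add_right, hzero]
    rw [Finset.sum_range_succ (fun l => b n (l + 1) • _) n, hself]
    simp only [zero_smul, add_zero]
    abel

end QAdjoint

section LeftRightDerivations

variable {k X : Type*} [CommRing k] [DecidableEq X] (c : X → X → k)

/-- The skew derivation `L_i` with `L_i (ι j) = δ_{ij}` and
`L_i (x * y) = L_i x * y + K_i x * L_i y`. -/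
def leftDeriv (i : X) : Module.End k (FreeAlgebra k X) :=
  skewDeriv (AlgHom.id k _) (diagHom c i) (Pi.single i 1)

/-- The skew derivation `R_i` with `R_i (ι j) = δ_{ij}` and
`R_i (x * y) = R_i x * K_i y + x * R_i y`. -/
def rightDeriv (i : X) : Module.End k (FreeAlgebra k X) :=
  skewDeriv (diagHom c i) (AlgHom.id k _) (Pi.single i 1)

@[simp]
lemma leftDeriv_ι (i j : X) : leftDeriv c i (ι k j) = if j = i then 1 else 0 := by
  simp [leftDeriv, Pi.single_apply]

@[simp]
lemma rightDeriv_ι (i j : X) : rightDeriv c i (ι k j) = if j = i then 1 else 0 := by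
  simp [rightDeriv, Pi.single_apply]

@[simp]
lemma leftDeriv_one (i : X) : leftDeriv c i 1 = 0 := skewDeriv_one _ _ _

@[simp]
lemma rightDeriv_one (i : X) : rightDeriv c i 1 = 0 := skewDeriv_one _ _ _

lemma leftDeriv_mul (i : X) (x y : FreeAlgebra k X) :
    leftDeriv c i (x * y) = leftDeriv c i x * y + diagHom c i x * leftDeriv c i y :=
  skewDeriv_mul _ _ _ x y

lemma rightDeriv_mul (i : X) (x y : FreeAlgebra k X) :
    rightDeriv c i (x * y) = rightDeriv c i x * diagHom c i y + x * rightDeriv c i y :=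
  skewDeriv_mul _ _ _ x y

lemma leftDeriv_diagHom (l i : X) (x : FreeAlgebra k X) :
    leftDeriv c i (diagHom c l x) = c l i • diagHom c l (leftDeriv c i x) := by
  refine skewDeriv_comp_algHom (σ := AlgHom.id k _) (by simp) (diagHom_comm c i l)
    (fun j => ?_) x
  rcases eq_or_ne j i with rfl | hj <;> simp [*]

lemma rightDeriv_diagHom (l i : X) (x : FreeAlgebra k X) :
    rightDeriv c i (diagHom c l x) = c l i • diagHom c l (rightDeriv c i x) := by
  refine skewDeriv_comp_algHom (τ := AlgHom.id k _) (diagHom_comm c i l) (by simp)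
    (fun j => ?_) x
  rcases eq_or_ne j i with rfl | hj <;> simp [*]

lemma leftDeriv_qAd (l i : X) (y : FreeAlgebra k X) :
    leftDeriv c l (qAd c i y) = leftDeriv c l y * ι k i -
      (c l i * c i l) • (ι k i * diagHom c i (leftDeriv c l y)) := by
  rcases eq_or_ne i l with rfl | hi
  · simp [qAd_apply, leftDeriv_mul, leftDeriv_diagHom, smul_smul, add_comm]
  · simp [qAd_apply, leftDeriv_mul, leftDeriv_diagHom, smul_smul, hi, mul_comm]

lemma rightDeriv_qAd_self (i : X) (y : FreeAlgebra k X) :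
    rightDeriv c i (qAd c i y) =
      c i i • qAd c i (rightDeriv c i y) + (y - diagHom c i (diagHom c i y)) := by
  simp only [qAd_apply, map_sub, rightDeriv_mul, rightDeriv_ι, diagHom_ι, rightDeriv_diagHom,
    if_true, mul_smul_comm, mul_one, one_mul, smul_sub]
  abel

lemma rightDeriv_qAd_of_ne {l i : X} (h : l ≠ i) (hc : c l i = c i l) (y : FreeAlgebra k X) :
    rightDeriv c l (qAd c i y) = c i l • qAd c i (rightDeriv c l y) := by
  simp [qAd_apply, rightDeriv_mul, rightDeriv_diagHom, h.symm, hc, smul_sub]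

lemma rightDeriv_qAd_pow_sub_mem (i : X) {J : TwoSidedIdeal (FreeAlgebra k X)}
    (hF : ∀ x ∈ J, qAd c i x ∈ J) {x : FreeAlgebra k X} {κ : k}
    (hx : diagHom c i x = κ • x) (hR : rightDeriv c i x ∈ J) (n : ℕ) :
    rightDeriv c i ((qAd c i ^ (n + 1)) x) -
      ((∑ t ∈ Finset.range (n + 1), c i i ^ t) * (1 - κ ^ 2 * c i i ^ n)) • (qAd c i ^ n) x
        ∈ J := by
  have hK : ∀ n, diagHom c i ((qAd c i ^ n) x) = (c i i ^ n * κ) • (qAd c i ^ n) x := by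
    intro n
    rw [diagHom_qAd_pow, hx, map_smul, smul_smul]
  induction n with
  | zero =>
    convert smul_mem_twoSidedIdeal J (c i i) (hF _ hR) using 1
    simp only [zero_add, pow_one, pow_zero, Module.End.one_apply, rightDeriv_qAd_self, hx,
      map_smul, smul_smul, Finset.range_one, Finset.sum_singleton]
    module
  | succ n ih =>
    convert smul_mem_twoSidedIdeal J (c i i) (hF _ ih) using 1
    rw [qAd_pow_succ_apply c i (n + 1), rightDeriv_qAd_self, hK, map_smul, hK, map_sub, map_smul,
      ← qAd_pow_succ_apply, smul_sub, smul_smul, smul_smul, geom_sum_succ]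
    have hcoeff : (c i i * ∑ t ∈ Finset.range (n + 1), c i i ^ t + 1) *
        (1 - κ ^ 2 * c i i ^ (n + 1)) =
        c i i * ((∑ t ∈ Finset.range (n + 1), c i i ^ t) * (1 - κ ^ 2 * c i i ^ n)) +
          (1 - c i i ^ (n + 1) * κ * (c i i ^ (n + 1) * κ)) := by
      have hgeom := geom_sum_succ (x := c i i) (n := n + 1)
      rw [Finset.sum_range_succ] at hgeom
      linear_combination (κ ^ 2 * c i i ^ (n + 1)) * hgeom
    rw [hcoeff]
    module

lemma leftDeriv_serreElt_of_ne {l j : X} (h : l ≠ j) (i : X) (n : ℕ) :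
    leftDeriv c l (serreElt c i j n) = 0 := by
  induction n with
  | zero => simp [serreElt_zero, h.symm]
  | succ n ih => simp [serreElt_succ, leftDeriv_qAd, ih]

lemma leftDeriv_serreElt_right (i j : X) (n : ℕ) :
    leftDeriv c j (serreElt c i j n) =
      (∏ t ∈ Finset.range n, (1 - c j i * c i j * c i i ^ t)) • ι k i ^ n := by
  induction n with
  | zero => simp [serreElt_zero]
  | succ n ih =>
    rw [serreElt_succ, leftDeriv_qAd, ih, Finset.prod_range_succ, map_smul, map_pow, diagHom_ι,
      smul_pow, smul_mul_assoc, mul_smul_comm, mul_smul_comm, ← pow_succ, ← pow_succ']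
    module

lemma rightDeriv_serreElt_of_ne {l i : X} (h : l ≠ i) (hc : c l i = c i l) (j : X) (n : ℕ) :
    rightDeriv c l (serreElt c i j (n + 1)) = 0 := by
  induction n with
  | zero => simp [serreElt_succ, serreElt_zero, rightDeriv_qAd_of_ne c h hc, apply_ite]
  | succ n ih => rw [serreElt_succ, rightDeriv_qAd_of_ne c h hc, ih, map_zero, smul_zero]

variable {c}

lemma leftDeriv_serreElt_eq_zero (hc : ∀ i j, c i j = c j i) {i j : X} {n : ℕ}
    (hn : c i j ^ 2 * c i i ^ n = 1) (l : X) : leftDeriv c l (serreElt c i j (n + 1)) = 0 := by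
  rcases eq_or_ne l j with rfl | hl
  · rw [leftDeriv_serreElt_right, Finset.prod_range_succ, hc l i, ← pow_two, hn, sub_self,
      mul_zero, zero_smul]
  · exact leftDeriv_serreElt_of_ne c hl i _

lemma rightDeriv_serreElt_eq_zero (hc : ∀ i j, c i j = c j i) {i j : X} (hij : i ≠ j) {n : ℕ}
    (hn : c i j ^ 2 * c i i ^ n = 1) (l : X) : rightDeriv c l (serreElt c i j (n + 1)) = 0 := by
  rcases eq_or_ne l i with rfl | hl
  · have h := rightDeriv_qAd_pow_sub_mem c l (J := ⊥) (by simp) (diagHom_ι c l j)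
      (by simp [hij.symm]) n
    simpa [hn, serreElt, TwoSidedIdeal.mem_bot] using h
  · exact rightDeriv_serreElt_of_ne c hl (hc _ _) j n

end LeftRightDerivations

section SerreIdeal

variable {k X : Type*} [CommRing k] (c : X → X → k) (m : X → X → ℕ)

/-- The two-sided ideal generated by the `q`-Serre elements `F_i ^ (m i j + 1) (ι j)`, `i ≠ j`;
for a Cartan matrix, `m i j = -a i j`. -/
def serreIdeal : TwoSidedIdeal (FreeAlgebra k X) :=
  TwoSidedIdeal.span {x | ∃ i j, i ≠ j ∧ x = serreElt c i j (m i j + 1)}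

variable {c m}

lemma serreElt_mem_serreIdeal {i j : X} (h : i ≠ j) :
    serreElt c i j (m i j + 1) ∈ serreIdeal c m :=
  TwoSidedIdeal.subset_span ⟨i, j, h, rfl⟩

lemma algebraMapInv_eq_zero_of_mem_serreIdeal {x : FreeAlgebra k X} (hx : x ∈ serreIdeal c m) :
    FreeAlgebra.algebraMapInv x = (0 : k) := by
  suffices h : serreIdeal c m ≤ (⊥ : TwoSidedIdeal k).comap FreeAlgebra.algebraMapInv from
    (TwoSidedIdeal.mem_bot k).1 ((TwoSidedIdeal.mem_comap _).1 (h hx))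
  refine TwoSidedIdeal.span_le.2 ?_
  rintro _ ⟨i, j, -, rfl⟩
  rw [SetLike.mem_coe, TwoSidedIdeal.mem_comap, TwoSidedIdeal.mem_bot, serreElt_succ, qAd_apply]
  simp [FreeAlgebra.algebraMapInv]

lemma diagHom_mem_serreIdeal (l : X) {x : FreeAlgebra k X} (hx : x ∈ serreIdeal c m) :
    diagHom c l x ∈ serreIdeal c m := by
  suffices h : serreIdeal c m ≤ (serreIdeal c m).comap (diagHom c l) from
    (TwoSidedIdeal.mem_comap _).1 (h hx)
  refine TwoSidedIdeal.span_le.2 ?_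
  rintro _ ⟨i, j, hij, rfl⟩
  rw [SetLike.mem_coe, TwoSidedIdeal.mem_comap, diagHom_serreElt]
  exact smul_mem_twoSidedIdeal _ _ (serreElt_mem_serreIdeal hij)

variable [DecidableEq X]

lemma leftDeriv_mem_serreIdeal (hc : ∀ i j, c i j = c j i)
    (hm : ∀ i j, i ≠ j → c i j ^ 2 * c i i ^ m i j = 1) (l : X) {x : FreeAlgebra k X}
    (hx : x ∈ serreIdeal c m) : leftDeriv c l x ∈ serreIdeal c m := by
  refine skewDeriv_mem_span (fun x hx => hx) (fun x => diagHom_mem_serreIdeal l) ?_ hx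
  rintro _ ⟨i, j, hij, rfl⟩
  have h := leftDeriv_serreElt_eq_zero hc (hm i j hij) l
  rw [leftDeriv] at h
  rw [h]
  exact zero_mem _

lemma rightDeriv_mem_serreIdeal (hc : ∀ i j, c i j = c j i)
    (hm : ∀ i j, i ≠ j → c i j ^ 2 * c i i ^ m i j = 1) (l : X) {x : FreeAlgebra k X}
    (hx : x ∈ serreIdeal c m) : rightDeriv c l x ∈ serreIdeal c m := by
  refine skewDeriv_mem_span (fun x => diagHom_mem_serreIdeal l) (fun x hx => hx) ?_ hx
  rintro _ ⟨i, j, hij, rfl⟩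
  have h := rightDeriv_serreElt_eq_zero hc hij (hm i j hij) l
  rw [rightDeriv] at h
  rw [h]
  exact zero_mem _

end SerreIdeal

section LocalNilpotency

variable {k X : Type*} [CommRing k] {c : X → X → k} {i : X} {J : TwoSidedIdeal (FreeAlgebra k X)}

lemma qAd_mem (hK : ∀ x ∈ J, diagHom c i x ∈ J) {x : FreeAlgebra k X} (hx : x ∈ J) :
    qAd c i x ∈ J :=
  sub_mem (J.mul_mem_right _ _ hx) (J.mul_mem_left _ _ (hK x hx))

lemma qAd_pow_mem (hK : ∀ x ∈ J, diagHom c i x ∈ J) {x : FreeAlgebra k X} {m n : ℕ}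
    (hx : (qAd c i ^ m) x ∈ J) (hmn : m ≤ n) : (qAd c i ^ n) x ∈ J := by
  induction n, hmn using Nat.le_induction with
  | base => exact hx
  | succ n _ ih => rw [qAd_pow_succ_apply]; exact qAd_mem hK ih

variable (c i J) in
/-- The elements on which `F_i` acts nilpotently modulo `J`. -/
def qAdNilpotent : Submodule k (FreeAlgebra k X) where
  carrier := {x | ∀ᶠ n in atTop, (qAd c i ^ n) x ∈ J}
  zero_mem' := by simp
  add_mem' hx hy := by
    filter_upwards [hx, hy] with n hxn hyn
    rw [map_add]
    exact add_mem hxn hyn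
  smul_mem' a x hx := by
    filter_upwards [hx] with n hxn
    rw [map_smul]
    exact smul_mem_twoSidedIdeal J a hxn

lemma mem_qAdNilpotent_of_qAd_pow_mem (hK : ∀ x ∈ J, diagHom c i x ∈ J) {x : FreeAlgebra k X}
    {n : ℕ} (hx : (qAd c i ^ n) x ∈ J) : x ∈ qAdNilpotent c i J :=
  eventually_atTop.2 ⟨n, fun _ hn => qAd_pow_mem hK hx hn⟩

lemma mem_qAdNilpotent_of_mem (hK : ∀ x ∈ J, diagHom c i x ∈ J) {x : FreeAlgebra k X}
    (hx : x ∈ J) : x ∈ qAdNilpotent c i J :=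
  mem_qAdNilpotent_of_qAd_pow_mem hK (n := 0) hx

lemma qAd_mem_qAdNilpotent {x : FreeAlgebra k X} (hx : x ∈ qAdNilpotent c i J) :
    qAd c i x ∈ qAdNilpotent c i J := by
  obtain ⟨N, hN⟩ := eventually_atTop.1 hx
  refine eventually_atTop.2 ⟨N, fun n hn => ?_⟩
  rw [← Module.End.mul_apply, ← pow_succ]
  exact hN _ (by lia)

end LocalNilpotency

section LocalNilpotencyField

variable {k X : Type*} [Field k] {c : X → X → k} {i : X} {J : TwoSidedIdeal (FreeAlgebra k X)}

lemma qAd_pow_diagHom_mem (hK : ∀ x ∈ J, diagHom c i x ∈ J) (h0 : c i i ≠ 0)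
    {x : FreeAlgebra k X} {n : ℕ} (hx : (qAd c i ^ n) x ∈ J) :
    (qAd c i ^ n) (diagHom c i x) ∈ J := by
  have h := hK _ hx
  rwa [diagHom_qAd_pow, smul_mem_twoSidedIdeal_iff J (pow_ne_zero n h0)] at h

lemma diagHom_mem_qAdNilpotent (hK : ∀ x ∈ J, diagHom c i x ∈ J) (h0 : c i i ≠ 0)
    {x : FreeAlgebra k X} (hx : x ∈ qAdNilpotent c i J) :
    diagHom c i x ∈ qAdNilpotent c i J := by
  filter_upwards [hx] with n hn using qAd_pow_diagHom_mem hK h0 hn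

lemma qAd_pow_add_mul_mem (hK : ∀ x ∈ J, diagHom c i x ∈ J) (h0 : c i i ≠ 0) {m n : ℕ}
    {y z : FreeAlgebra k X} (hy : (qAd c i ^ m) y ∈ J) (hz : (qAd c i ^ n) z ∈ J) :
    (qAd c i ^ (m + n)) (y * z) ∈ J := by
  induction hs : m + n generalizing m n y z with
  | zero =>
    obtain ⟨rfl, rfl⟩ : m = 0 ∧ n = 0 := by lia
    exact J.mul_mem_left _ _ hz
  | succ s ih =>
    rcases m with _ | m
    · exact qAd_pow_mem hK (m := 0) (J.mul_mem_right _ _ hy) (Nat.zero_le _)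
    rcases n with _ | n
    · exact qAd_pow_mem hK (m := 0) (J.mul_mem_left _ _ hz) (Nat.zero_le _)
    have hy' : (qAd c i ^ m) (qAd c i y) ∈ J := by rwa [← Module.End.mul_apply, ← pow_succ]
    have hz' : (qAd c i ^ n) (qAd c i z) ∈ J := by rwa [← Module.End.mul_apply, ← pow_succ]
    rw [pow_succ, Module.End.mul_apply, qAd_mul, map_add]
    exact add_mem (ih hy hz' (by lia)) (ih hy' (qAd_pow_diagHom_mem hK h0 hz) (by lia))

lemma mul_mem_qAdNilpotent (hK : ∀ x ∈ J, diagHom c i x ∈ J) (h0 : c i i ≠ 0)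
    {y z : FreeAlgebra k X} (hy : y ∈ qAdNilpotent c i J) (hz : z ∈ qAdNilpotent c i J) :
    y * z ∈ qAdNilpotent c i J := by
  obtain ⟨m, hm⟩ := Eventually.exists hy
  obtain ⟨n, hn⟩ := Eventually.exists hz
  exact mem_qAdNilpotent_of_qAd_pow_mem hK (qAd_pow_add_mul_mem hK h0 hm hn)

end LocalNilpotencyField

section PowerFiltration

variable {k X : Type*} [CommRing k] [DecidableEq X] (c : X → X → k) (i : X)
  (J : TwoSidedIdeal (FreeAlgebra k X))

/-- The `L_i`-constants on which `F_i` acts nilpotently modulo `J`. -/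
def nilpotentConstants : Submodule k (FreeAlgebra k X) :=
  (leftDeriv c i).ker ⊓ qAdNilpotent c i J

/-- The elements `∑ t < n, ι i ^ t * b t` with all `b t` in `nilpotentConstants c i J`. -/
def powFiltration : ℕ → Submodule k (FreeAlgebra k X)
  | 0 => ⊥
  | n + 1 => powFiltration n ⊔ (nilpotentConstants c i J).map (LinearMap.mulLeft k (ι k i ^ n))

variable {c i J}

lemma mem_powFiltration_succ {n : ℕ} {x : FreeAlgebra k X} :
    x ∈ powFiltration c i J (n + 1) ↔
      ∃ y ∈ powFiltration c i J n, ∃ b ∈ nilpotentConstants c i J, y + ι k i ^ n * b = x := by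
  simp [powFiltration, Submodule.mem_sup]

lemma powFiltration_mono : Monotone (powFiltration c i J) :=
  monotone_nat_of_le_succ fun _ => le_sup_left

lemma pow_mul_mem_powFiltration (n : ℕ) {b : FreeAlgebra k X}
    (hb : b ∈ nilpotentConstants c i J) : ι k i ^ n * b ∈ powFiltration c i J (n + 1) :=
  mem_powFiltration_succ.2 ⟨0, zero_mem _, b, hb, zero_add _⟩

lemma one_mem_nilpotentConstants : 1 ∈ nilpotentConstants c i J :=
  ⟨by simp, eventually_atTop.2 ⟨1, fun n hn => by
    obtain ⟨n, rfl⟩ := Nat.exists_eq_add_of_le' hn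
    simp [pow_succ]⟩⟩

lemma qAd_mem_nilpotentConstants {b : FreeAlgebra k X} (hb : b ∈ nilpotentConstants c i J) :
    qAd c i b ∈ nilpotentConstants c i J := by
  have hL : leftDeriv c i b = 0 := hb.1
  exact ⟨by simp [leftDeriv_qAd, hL], qAd_mem_qAdNilpotent hb.2⟩

lemma leftDeriv_pow_mul (n : ℕ) {b : FreeAlgebra k X} (hb : leftDeriv c i b = 0) :
    leftDeriv c i (ι k i ^ (n + 1) * b) =
      (∑ t ∈ Finset.range (n + 1), c i i ^ t) • (ι k i ^ n * b) := by
  induction n with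
  | zero => simp [leftDeriv_mul, hb]
  | succ n ih =>
    rw [pow_succ', mul_assoc, leftDeriv_mul, ih, leftDeriv_ι, if_pos rfl, one_mul, diagHom_ι,
      smul_mul_assoc, mul_smul_comm, ← mul_assoc, ← pow_succ',
      geom_sum_succ (n := n + 1)]
    module

lemma leftDeriv_pow_pow_mul (n : ℕ) {b : FreeAlgebra k X} (hb : leftDeriv c i b = 0) :
    (leftDeriv c i ^ n) (ι k i ^ n * b) =
      (∏ s ∈ Finset.range n, ∑ t ∈ Finset.range (s + 1), c i i ^ t) • b := by
  induction n with
  | zero => simp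
  | succ n ih =>
    rw [pow_succ, Module.End.mul_apply, leftDeriv_pow_mul n hb, map_smul, ih, smul_smul, mul_comm,
      Finset.prod_range_succ]

lemma leftDeriv_pow_eq_zero_of_mem_powFiltration {n : ℕ} {x : FreeAlgebra k X}
    (hx : x ∈ powFiltration c i J n) : (leftDeriv c i ^ n) x = 0 := by
  induction n generalizing x with
  | zero => rw [(Submodule.mem_bot k).1 hx, map_zero]
  | succ n ih =>
    obtain ⟨y, hy, b, hb, rfl⟩ := mem_powFiltration_succ.1 hx
    have hL : leftDeriv c i b = 0 := hb.1
    rw [pow_succ', Module.End.mul_apply, map_add, ih hy, leftDeriv_pow_pow_mul n hL, zero_add,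
      map_smul, hL, smul_zero]

end PowerFiltration

section PrimitiveElements

variable {k X : Type*} [Field k] [DecidableEq X] {c : X → X → k} {i : X}
  {J : TwoSidedIdeal (FreeAlgebra k X)}

lemma geom_sum_ne_zero_of_pow_ne_one {a : k} {n : ℕ} (ha : a ^ n ≠ 1) :
    ∑ t ∈ Finset.range n, a ^ t ≠ 0 := fun h =>
  ha (sub_eq_zero.1 (by rw [← geom_sum_mul, h, zero_mul]))

lemma mul_ι_mem_powFiltration (hK : ∀ x ∈ J, diagHom c i x ∈ J) (h0 : c i i ≠ 0)
    (hF : ∀ j, j ≠ i → ι k j ∈ qAdNilpotent c i J) (j : X) {n : ℕ} {x : FreeAlgebra k X}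
    (hx : x ∈ powFiltration c i J n) : x * ι k j ∈ powFiltration c i J (n + 1) := by
  induction n generalizing x with
  | zero => rw [(Submodule.mem_bot k).1 hx, zero_mul]; exact zero_mem _
  | succ n ih =>
    obtain ⟨y, hy, b, hb, rfl⟩ := mem_powFiltration_succ.1 hx
    have hL : leftDeriv c i b = 0 := hb.1
    have hmono := powFiltration_mono (c := c) (i := i) (J := J) (n + 1).le_succ
    rw [add_mul]
    refine add_mem (hmono (ih hy)) ?_
    rcases eq_or_ne j i with rfl | hj
    · have hcomm : ι k j ^ n * b * ι k j =
          ι k j ^ n * qAd c j b + ι k j ^ (n + 1) * diagHom c j b := by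
        rw [qAd_apply, pow_succ]; noncomm_ring
      have hKb : diagHom c j b ∈ nilpotentConstants c j J :=
        ⟨by simp [leftDeriv_diagHom, hL], diagHom_mem_qAdNilpotent hK h0 hb.2⟩
      rw [hcomm]
      exact add_mem (hmono (pow_mul_mem_powFiltration n (qAd_mem_nilpotentConstants hb)))
        (pow_mul_mem_powFiltration (n + 1) hKb)
    · have hbj : b * ι k j ∈ nilpotentConstants c i J :=
        ⟨by simp [leftDeriv_mul, hL, hj], mul_mem_qAdNilpotent hK h0 hb.2 (hF j hj)⟩
      rw [mul_assoc]
      exact hmono (pow_mul_mem_powFiltration n hbj)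

lemma exists_mem_powFiltration (hK : ∀ x ∈ J, diagHom c i x ∈ J) (h0 : c i i ≠ 0)
    (hF : ∀ j, j ≠ i → ι k j ∈ qAdNilpotent c i J) (x : FreeAlgebra k X) :
    ∃ n, x ∈ powFiltration c i J n := by
  have hsup {x} : x ∈ ⨆ n, powFiltration c i J n ↔ ∃ n, x ∈ powFiltration c i J n :=
    Submodule.mem_iSup_of_directed _ powFiltration_mono.directed_le
  suffices h : ∀ y ∈ ⨆ n, powFiltration c i J n, y * x ∈ ⨆ n, powFiltration c i J n by
    have hone : (1 : FreeAlgebra k X) ∈ powFiltration c i J 1 := by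
      simpa using pow_mul_mem_powFiltration 0 one_mem_nilpotentConstants
    simpa using hsup.1 (h 1 (hsup.2 ⟨1, hone⟩))
  induction x using FreeAlgebra.induction with
  | grade0 a =>
    intro y hy
    rw [← Algebra.commutes, ← Algebra.smul_def]
    exact Submodule.smul_mem _ a hy
  | grade1 j =>
    intro y hy
    obtain ⟨n, hn⟩ := hsup.1 hy
    exact hsup.2 ⟨n + 1, mul_ι_mem_powFiltration hK h0 hF j hn⟩
  | mul u v hu hv => intro y hy; rw [← mul_assoc]; exact hv _ (hu _ hy)
  | add u v hu hv => intro y hy; rw [mul_add]; exact add_mem (hu _ hy) (hv _ hy)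

-- Applying `L_i ^ n` isolates the top coefficient `b n`, which therefore lies in `J` once `n > 0`.
lemma mem_qAdNilpotent_of_mem_powFiltration (hK : ∀ x ∈ J, diagHom c i x ∈ J)
    (hL : ∀ x ∈ J, leftDeriv c i x ∈ J) (h1 : ∀ n, c i i ^ (n + 1) ≠ 1) {n : ℕ}
    {x : FreeAlgebra k X} (hx : x ∈ powFiltration c i J n) (hLx : leftDeriv c i x ∈ J) :
    x ∈ qAdNilpotent c i J := by
  induction n generalizing x with
  | zero => rw [(Submodule.mem_bot k).1 hx]; exact zero_mem _
  | succ n ih =>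
    obtain ⟨y, hy, b, hb, rfl⟩ := mem_powFiltration_succ.1 hx
    rcases n with _ | n
    · rw [(Submodule.mem_bot k).1 hy, zero_add, pow_zero, one_mul]
      exact hb.2
    have hLpow : ∀ s, (leftDeriv c i ^ (s + 1)) (y + ι k i ^ (n + 1) * b) ∈ J := by
      intro s
      induction s with
      | zero => simpa using hLx
      | succ s ihs => rw [pow_succ', Module.End.mul_apply]; exact hL _ ihs
    have hbJ : b ∈ J := by
      have h := hLpow n
      rw [map_add, leftDeriv_pow_eq_zero_of_mem_powFiltration hy,
        leftDeriv_pow_pow_mul (n + 1) (LinearMap.mem_ker.1 hb.1), zero_add] at h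
      exact (smul_mem_twoSidedIdeal_iff J (Finset.prod_ne_zero_iff.2 fun s _ =>
        geom_sum_ne_zero_of_pow_ne_one (h1 s))).1 h
    have hιb : ι k i ^ (n + 1) * b ∈ J := J.mul_mem_left _ _ hbJ
    rw [map_add] at hLx
    exact add_mem (ih hy ((add_mem_cancel_right (hL _ hιb)).1 hLx))
      (mem_qAdNilpotent_of_mem hK hιb)

-- The lowest power of `F_i` sending `x` into `J` must be the zeroth one, since `R_i` maps
-- `F_i ^ (n + 1) x` to a nonzero multiple of `F_i ^ n x` modulo `J`.
lemma mem_of_mem_qAdNilpotent (hK : ∀ x ∈ J, diagHom c i x ∈ J)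
    (hR : ∀ x ∈ J, rightDeriv c i x ∈ J) (h1 : ∀ n, c i i ^ (n + 1) ≠ 1)
    {x : FreeAlgebra k X} {κ : k} (hx : diagHom c i x = κ • x)
    (hκ : ∀ n, κ ^ 2 * c i i ^ n ≠ 1) (hRx : rightDeriv c i x ∈ J)
    (hnil : x ∈ qAdNilpotent c i J) : x ∈ J := by
  obtain ⟨n, hn⟩ := Eventually.exists hnil
  induction n with
  | zero => exact hn
  | succ n ih =>
    apply ih
    have h := rightDeriv_qAd_pow_sub_mem c i (fun _ => qAd_mem hK) hx hRx n
    rw [sub_mem_comm_iff, sub_eq_add_neg, add_mem_cancel_right (neg_mem (hR _ hn))] at h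
    exact (smul_mem_twoSidedIdeal_iff J (mul_ne_zero (geom_sum_ne_zero_of_pow_ne_one (h1 n))
      (sub_ne_zero.2 (hκ n).symm))).1 h

theorem mem_of_leftDeriv_mem_of_rightDeriv_mem (hK : ∀ x ∈ J, diagHom c i x ∈ J)
    (hL : ∀ x ∈ J, leftDeriv c i x ∈ J) (hR : ∀ x ∈ J, rightDeriv c i x ∈ J)
    (hF : ∀ j, j ≠ i → ι k j ∈ qAdNilpotent c i J) (h0 : c i i ≠ 0)
    (h1 : ∀ n, c i i ^ (n + 1) ≠ 1) {x : FreeAlgebra k X} {κ : k} (hx : diagHom c i x = κ • x)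
    (hκ : ∀ n, κ ^ 2 * c i i ^ n ≠ 1) (hLx : leftDeriv c i x ∈ J)
    (hRx : rightDeriv c i x ∈ J) : x ∈ J := by
  obtain ⟨n, hn⟩ := exists_mem_powFiltration hK h0 hF x
  exact mem_of_mem_qAdNilpotent hK hR h1 hx hκ hRx
    (mem_qAdNilpotent_of_mem_powFiltration hK hL h1 hn hLx)

theorem mem_serreIdeal_of_leftDeriv_mem_of_rightDeriv_mem {m : X → X → ℕ}
    (hc : ∀ i j, c i j = c j i) (hm : ∀ i j, i ≠ j → c i j ^ 2 * c i i ^ m i j = 1)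
    (h0 : c i i ≠ 0) (h1 : ∀ n, c i i ^ (n + 1) ≠ 1) {x : FreeAlgebra k X} {κ : k}
    (hx : diagHom c i x = κ • x) (hκ : ∀ n, κ ^ 2 * c i i ^ n ≠ 1)
    (hLx : leftDeriv c i x ∈ serreIdeal c m) (hRx : rightDeriv c i x ∈ serreIdeal c m) :
    x ∈ serreIdeal c m :=
  have hK : ∀ x ∈ serreIdeal c m, diagHom c i x ∈ serreIdeal c m :=
    fun _ => diagHom_mem_serreIdeal i
  mem_of_leftDeriv_mem_of_rightDeriv_mem hK (fun _ => leftDeriv_mem_serreIdeal hc hm i)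
    (fun _ => rightDeriv_mem_serreIdeal hc hm i)
    (fun _ hj => mem_qAdNilpotent_of_qAd_pow_mem hK (serreElt_mem_serreIdeal hj.symm))
    h0 h1 hx hκ hLx hRx

end PrimitiveElements

section WordPairing

variable (k X : Type*) [CommRing k]

/-- The basis of the free algebra consisting of the products of generators along words. -/
def wordBasis : Module.Basis (List X) k (FreeAlgebra k X) :=
  (FreeAlgebra.basisFreeMonoid k X).reindex FreeMonoid.toList

/-- The pairing between the free algebra and finitely supported functions on words for which
`wordBasis` is dual to the words. -/
def wordPairing : FreeAlgebra k X →ₗ[k] (List X →₀ k) →ₗ[k] k :=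
  (wordBasis k X).constr k Finsupp.lapply

variable {k X}

/-- The transpose of right multiplication by a generator: it strips the letter `a` off the end of
each word, killing the words which do not end in `a`. -/
def deleteLast (a : X) : Module.End k (List X →₀ k) :=
  Finsupp.lcomapDomain (· ++ [a]) (List.append_left_injective [a])

lemma wordBasis_apply (u : List X) : wordBasis k X u = (u.map (ι k)).prod := by
  simp [wordBasis, FreeAlgebra.basisFreeMonoid, FreeAlgebra.equivMonoidAlgebraFreeMonoid]

@[simp]
lemma wordBasis_nil : wordBasis k X [] = 1 := by
  simp [wordBasis_apply]

lemma wordBasis_append (u v : List X) :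
    wordBasis k X (u ++ v) = wordBasis k X u * wordBasis k X v := by
  simp [wordBasis_apply]

@[simp]
lemma wordBasis_singleton (a : X) : wordBasis k X [a] = ι k a := by
  simp [wordBasis_apply]

@[simp]
lemma wordBasis_replicate (n : ℕ) (a : X) : wordBasis k X (List.replicate n a) = ι k a ^ n := by
  simp [wordBasis_apply]

@[elab_as_elim]
lemma induction_mul_ι {motive : FreeAlgebra k X → Prop} (one : motive 1)
    (mul_ι : ∀ x a, motive x → motive (x * ι k a))
    (add : ∀ x y, motive x → motive y → motive (x + y))
    (smul : ∀ (s : k) x, motive x → motive (s • x)) (x : FreeAlgebra k X) : motive x := by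
  have hx : x ∈ Submodule.span k (Set.range (wordBasis k X)) := by simp [(wordBasis k X).span_eq]
  induction hx using Submodule.span_induction with
  | mem x hx =>
    obtain ⟨u, rfl⟩ := hx
    induction u using List.reverseRecOn with
    | nil => rwa [wordBasis_nil]
    | append_singleton u a ih =>
      rw [wordBasis_append, wordBasis_singleton]
      exact mul_ι _ a ih
  | zero => simpa using smul 0 1 one
  | add x y _ _ hx hy => exact add x y hx hy
  | smul s x _ hx => exact smul s x hx

@[simp]
lemma deleteLast_apply (a : X) (f : List X →₀ k) (u : List X) :
    deleteLast a f u = f (u ++ [a]) := rfl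

@[simp]
lemma deleteLast_single_nil (a : X) (s : k) : deleteLast a (Finsupp.single [] s) = 0 := by
  ext u
  simp

lemma deleteLast_mapDomain_append_self (a : X) (f : List X →₀ k) :
    deleteLast a (Finsupp.mapDomain (· ++ [a]) f) = f :=
  Finsupp.comapDomain_mapDomain _ (List.append_left_injective [a]) f

lemma deleteLast_mapDomain_append_of_ne {a b : X} (h : a ≠ b) (f : List X →₀ k) :
    deleteLast a (Finsupp.mapDomain (· ++ [b]) f) = 0 := by
  ext u
  refine Finsupp.mapDomain_of_notMem_range _ _ ?_
  rintro ⟨v, hv⟩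
  exact h (by simpa using (List.append_inj' hv rfl).2.symm)

lemma deleteLast_single_concat [DecidableEq X] (a b : X) (w : List X) (s : k) :
    deleteLast a (Finsupp.single (w ++ [b]) s) = if a = b then Finsupp.single w s else 0 := by
  rw [← Finsupp.mapDomain_single (f := (· ++ [b]))]
  split_ifs with h
  · rw [h, deleteLast_mapDomain_append_self]
  · rw [deleteLast_mapDomain_append_of_ne h]

lemma wordPairing_wordBasis (u : List X) (f : List X →₀ k) :
    wordPairing k X (wordBasis k X u) f = f u := by
  simp [wordPairing]

lemma wordPairing_one (f : List X →₀ k) : wordPairing k X 1 f = f [] := by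
  rw [← wordBasis_nil, wordPairing_wordBasis]

lemma wordPairing_mul_ι (x : FreeAlgebra k X) (a : X) (f : List X →₀ k) :
    wordPairing k X (x * ι k a) f = wordPairing k X x (deleteLast a f) := by
  suffices h : wordPairing k X ∘ₗ LinearMap.mulRight k (ι k a) =
      (wordPairing k X).compl₂ (deleteLast a) from DFunLike.congr_fun (DFunLike.congr_fun h x) f
  refine (wordBasis k X).ext fun u => LinearMap.ext fun f => ?_
  simpa [wordBasis_append, wordPairing_wordBasis] using wordPairing_wordBasis (u ++ [a]) f

lemma wordPairing_single (x : FreeAlgebra k X) (u : List X) (s : k) :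
    wordPairing k X x (Finsupp.single u s) = (wordBasis k X).repr x u * s := by
  suffices h : (wordPairing k X).flip (Finsupp.single u s) =
      s • Finsupp.lapply u ∘ₗ (wordBasis k X).repr.toLinearMap by
    simpa [mul_comm] using DFunLike.congr_fun h x
  classical
  refine (wordBasis k X).ext fun v => ?_
  simp [wordPairing_wordBasis, Finsupp.single_apply, eq_comm]

lemma wordPairing_single_nil (x : FreeAlgebra k X) (s : k) :
    wordPairing k X x (Finsupp.single [] s) = FreeAlgebra.algebraMapInv x * s := by
  induction x using induction_mul_ι with
  | one => simp [wordPairing_one]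
  | mul_ι x a => simp [wordPairing_mul_ι, FreeAlgebra.algebraMapInv]
  | add x y hx hy => simp [hx, hy, add_mul]
  | smul t x hx => simp [hx, mul_assoc]

lemma ext_wordPairing {x y : FreeAlgebra k X}
    (h : ∀ u, wordPairing k X x (Finsupp.single u 1) = wordPairing k X y (Finsupp.single u 1)) :
    x = y :=
  (wordBasis k X).ext_elem fun u => by simpa [wordPairing_single] using h u

lemma wordPairing_mul_mul_eq_zero {x : FreeAlgebra k X} {f : List X →₀ k}
    (h : ∀ z t, wordPairing k X (wordBasis k X z * x * wordBasis k X t) f = 0)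
    (y y' : FreeAlgebra k X) : wordPairing k X (y * x * y') f = 0 := by
  suffices h : ((LinearMap.mul k _ ∘ₗ LinearMap.mulRight k x).compr₂ ((wordPairing k X).flip f)) = 0
    from DFunLike.congr_fun (DFunLike.congr_fun h y) y'
  exact LinearMap.ext_basis (wordBasis k X) (wordBasis k X) h

lemma wordPairing_eq_zero_of_mem_span {s : Set (FreeAlgebra k X)} {f : List X →₀ k}
    (h : ∀ x ∈ s, ∀ z t, wordPairing k X (wordBasis k X z * x * wordBasis k X t) f = 0)
    {x : FreeAlgebra k X} (hx : x ∈ TwoSidedIdeal.span s) : wordPairing k X x f = 0 := by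
  suffices h : ∀ y y', wordPairing k X (y * x * y') f = 0 by simpa using h 1 1
  induction hx using TwoSidedIdeal.span_induction with
  | mem x hx => exact wordPairing_mul_mul_eq_zero (h x hx)
  | zero => simp
  | add x x' _ _ hx hx' => simp [mul_add, add_mul, hx, hx']
  | neg x _ hx => simp [hx]
  | left_absorb a x _ hx =>
    intro y y'
    rw [← mul_assoc y]
    exact hx (y * a) y'
  | right_absorb b x _ hx =>
    intro y y'
    rw [← mul_assoc y, mul_assoc _ b]
    exact hx y (b * y')

end WordPairing

section Degree

variable {k X : Type*} [CommRing k]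

variable (k) in
/-- The functions supported on the words of degree `ν`, a degree being recorded as the multiset of
the letters of the word. -/
def wordComponent (ν : Multiset X) : Submodule k (List X →₀ k) :=
  Finsupp.supported k k {u | (u : Multiset X) = ν}

/-- The element `x` of the free algebra is a combination of the products of generators along words
of degree `ν`, a degree being recorded as the multiset of the letters of the word. -/
def IsHomogeneousOfDegree (x : FreeAlgebra k X) (ν : Multiset X) : Prop :=
  ∀ u : List X, (u : Multiset X) ≠ ν → wordPairing k X x (Finsupp.single u 1) = 0

lemma single_mem_wordComponent (u : List X) (s : k) :
    Finsupp.single u s ∈ wordComponent k (u : Multiset X) :=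
  Finsupp.single_mem_supported k s rfl

lemma mem_wordComponent_iff {ν : Multiset X} {f : List X →₀ k} :
    f ∈ wordComponent k ν ↔ ∀ u, f u ≠ 0 → (u : Multiset X) = ν := by
  simp [wordComponent, Finsupp.mem_supported, Set.subset_def]

lemma coe_append_singleton (u : List X) (a : X) :
    ((u ++ [a] : List X) : Multiset X) = a ::ₘ (u : Multiset X) :=
  Multiset.coe_eq_coe.2 (List.perm_append_singleton a u)

lemma deleteLast_mem_wordComponent {a : X} {ν : Multiset X} {f : List X →₀ k}
    (hf : f ∈ wordComponent k (a ::ₘ ν)) : deleteLast a f ∈ wordComponent k ν := by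
  refine mem_wordComponent_iff.2 fun u hu => ?_
  rw [← Multiset.cons_inj_right a, ← coe_append_singleton]
  exact mem_wordComponent_iff.1 hf _ hu

lemma mem_of_deleteLast_ne_zero {a : X} {ν : Multiset X} {f : List X →₀ k}
    (hf : f ∈ wordComponent k ν) (ha : deleteLast a f ≠ 0) : a ∈ ν := by
  obtain ⟨u, hu⟩ := DFunLike.ne_iff.1 ha
  simp [← mem_wordComponent_iff.1 hf (u ++ [a]) hu]

lemma IsHomogeneousOfDegree.wordPairing_eq_zero {x : FreeAlgebra k X} {μ ν : Multiset X}
    {f : List X →₀ k} (hx : IsHomogeneousOfDegree x ν) (hf : f ∈ wordComponent k μ) (h : μ ≠ ν) :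
    wordPairing k X x f = 0 := by
  rw [wordComponent, Finsupp.supported_eq_span_single] at hf
  induction hf using Submodule.span_induction with
  | mem g hg =>
    obtain ⟨u, rfl, rfl⟩ := hg
    exact hx u h
  | zero => exact map_zero _
  | add g g' _ _ hg hg' => rw [map_add, hg, hg', add_zero]
  | smul s g _ hg => rw [map_smul, hg, smul_zero]

lemma functional_eq_sum_of_support_subset (φ : Module.Dual k (List X →₀ k))
    {g : List X →₀ k} {s : Finset (List X)} (hs : g.support ⊆ s) :
    φ g = ∑ u ∈ s, φ (Finsupp.single u 1) * g u := by
  conv_lhs => rw [← Finsupp.sum_single g, Finsupp.sum_of_support_subset g hs _ (by simp), map_sum]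
  refine Finset.sum_congr rfl fun u _ => ?_
  rw [← Finsupp.smul_single_one, map_smul, smul_eq_mul, mul_comm]

section FunctionalComponent

variable [DecidableEq X]

/-- The element of the free algebra representing, under the pairing with words, the restriction of
the functional `φ` to the words of degree `ν`. -/
def functionalComponent (φ : Module.Dual k (List X →₀ k)) (ν : Multiset X) : FreeAlgebra k X :=
  ∑ u ∈ ν.lists.toFinset, φ (Finsupp.single u 1) • wordBasis k X u

variable (φ : Module.Dual k (List X →₀ k))

lemma mem_lists_toFinset {ν : Multiset X} {u : List X} :
    u ∈ ν.lists.toFinset ↔ (u : Multiset X) = ν := by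
  rw [Multiset.mem_toFinset, Multiset.mem_lists_iff, Multiset.quot_mk_to_coe, eq_comm]

lemma wordPairing_functionalComponent (ν : Multiset X) (g : List X →₀ k) :
    wordPairing k X (functionalComponent φ ν) g =
      ∑ u ∈ ν.lists.toFinset, φ (Finsupp.single u 1) * g u := by
  simp [functionalComponent, wordPairing_wordBasis]

lemma isHomogeneousOfDegree_functionalComponent (ν : Multiset X) :
    IsHomogeneousOfDegree (functionalComponent φ ν) ν := by
  intro u hu
  rw [wordPairing_functionalComponent]
  refine Finset.sum_eq_zero fun v hv => ?_
  have hvu : u ≠ v := by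
    rintro rfl
    exact hu (mem_lists_toFinset.1 hv)
  rw [Finsupp.single_eq_of_ne' hvu, mul_zero]

lemma wordPairing_functionalComponent_of_mem {ν : Multiset X} {g : List X →₀ k}
    (hg : g ∈ wordComponent k ν) : wordPairing k X (functionalComponent φ ν) g = φ g := by
  rw [wordPairing_functionalComponent, ← functional_eq_sum_of_support_subset]
  exact fun u hu => mem_lists_toFinset.2 (hg hu)

lemma functional_eq_sum_functionalComponent (g : List X →₀ k) :
    φ g = ∑ ν ∈ g.support.image ((↑) : List X → Multiset X),
      wordPairing k X (functionalComponent φ ν) g := by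
  simp only [wordPairing_functionalComponent]
  rw [← Finset.sum_biUnion]
  · refine functional_eq_sum_of_support_subset φ fun u hu => ?_
    exact Finset.mem_biUnion.2 ⟨u, Finset.mem_image_of_mem _ hu, mem_lists_toFinset.2 rfl⟩
  · intro μ _ ν _ hμν
    refine Finset.disjoint_left.2 fun u hu hu' => hμν ?_
    rw [← mem_lists_toFinset.1 hu, mem_lists_toFinset.1 hu']

end FunctionalComponent

end Degree

section QShuffle

variable (p : Fin r → Fin r → ℤ)

/-- The `q`-shuffle product as a bilinear map. -/
def shuffleBilin : FA r →ₗ[K] FA r →ₗ[K] FA r :=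
  Finsupp.lsum K fun w => LinearMap.toSpanSingleton K _
    (Finsupp.lsum K fun x => LinearMap.toSpanSingleton K _ (shAux p w.reverse x.reverse))

/-- The diagonal operator multiplying each word `w` by `q ^ (-(|w|, α_a))`. -/
def degreeScale (a : Fin r) : Module.End K (FA r) :=
  Finsupp.lsum K fun w => qq ^ (-(pairW p w [a])) • Finsupp.lsingle w

lemma qq_ne_zero : qq ≠ 0 := RatFunc.X_ne_zero

lemma pairW_reverse_left (w x : Word r) : pairW p w.reverse x = pairW p w x := by
  simp [pairW, List.sum_reverse]

lemma pairW_append_left (u v x : Word r) : pairW p (u ++ v) x = pairW p u x + pairW p v x := by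
  simp [pairW]

lemma pairW_singleton (a b : Fin r) : pairW p [a] [b] = p a b := by
  simp [pairW]

lemma shuffleBilin_apply (f g : FA r) : shuffleBilin p f g = shuffle p f g := by
  simp [shuffleBilin, shuffle, Finsupp.sum, Finset.smul_sum, smul_smul]

lemma shuffleBilin_single_single (w x : Word r) :
    shuffleBilin p (Finsupp.single w 1) (Finsupp.single x 1) = shAux p w.reverse x.reverse := by
  simp [shuffleBilin]

lemma degreeScale_single (a : Fin r) (w : Word r) (s : K) :
    degreeScale p a (Finsupp.single w s) = qq ^ (-(pairW p w [a])) • Finsupp.single w s := by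
  simp [degreeScale]

@[simp]
lemma degreeScale_apply (a : Fin r) (f : FA r) (u : Word r) :
    degreeScale p a f u = qq ^ (-(pairW p u [a])) * f u := by
  induction f using Finsupp.induction_linear with
  | zero => simp
  | add f g hf hg => simp [hf, hg, mul_add]
  | single w s =>
    rw [degreeScale_single, Finsupp.smul_apply, smul_eq_mul, Finsupp.single_apply]
    split_ifs with h <;> simp [h]

variable {p} in
lemma degreeScale_mem_wordComponent (a : Fin r) {ν : Multiset (Fin r)} {f : FA r}
    (hf : f ∈ wordComponent K ν) : degreeScale p a f ∈ wordComponent K ν := by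
  refine mem_wordComponent_iff.2 fun u hu => mem_wordComponent_iff.1 hf u ?_
  rw [degreeScale_apply] at hu
  exact right_ne_zero_of_mul hu

lemma degreeScale_comm (a b : Fin r) (f : FA r) :
    degreeScale p a (degreeScale p b f) = degreeScale p b (degreeScale p a f) := by
  ext u
  simp [mul_left_comm]

lemma deleteLast_degreeScale (a b : Fin r) (f : FA r) :
    deleteLast b (degreeScale p a f) = qq ^ (-(p b a)) • degreeScale p a (deleteLast b f) := by
  ext u
  simp only [deleteLast_apply, degreeScale_apply, Finsupp.smul_apply, smul_eq_mul,
    pairW_append_left, pairW_singleton, neg_add, zpow_add₀ qq_ne_zero]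
  ring

lemma shAux_nil_left (x : Word r) : shAux p [] x = Finsupp.single x.reverse 1 := by
  simp [shAux]

lemma shAux_nil_right (w : Word r) : shAux p w [] = Finsupp.single w.reverse 1 := by
  cases w <;> simp [shAux]

@[simp]
lemma shuffleBilin_one_left (f : FA r) : shuffleBilin p (Finsupp.single [] 1) f = f := by
  suffices h : shuffleBilin p (Finsupp.single [] 1) = LinearMap.id by rw [h, LinearMap.id_apply]
  refine Finsupp.lhom_ext' fun w => LinearMap.ext_ring ?_
  simp [shuffleBilin_single_single, shAux_nil_left]

@[simp]
lemma shuffleBilin_one_right (f : FA r) : shuffleBilin p f (Finsupp.single [] 1) = f := by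
  suffices h : (shuffleBilin p).flip (Finsupp.single [] 1) = LinearMap.id from
    DFunLike.congr_fun h f
  refine Finsupp.lhom_ext' fun w => LinearMap.ext_ring ?_
  simp [shuffleBilin_single_single, shAux_nil_right]

lemma shuffleBilin_concat_concat (w x : Word r) (a b : Fin r) :
    shuffleBilin p (Finsupp.single (w ++ [a]) 1) (Finsupp.single (x ++ [b]) 1) =
      Finsupp.mapDomain (· ++ [a])
        (shuffleBilin p (Finsupp.single w 1) (Finsupp.single (x ++ [b]) 1)) +
      qq ^ (-(pairW p (w ++ [a]) [b])) • Finsupp.mapDomain (· ++ [b])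
        (shuffleBilin p (Finsupp.single (w ++ [a]) 1) (Finsupp.single x 1)) := by
  simp only [shuffleBilin_single_single, List.reverse_append, List.reverse_singleton,
    List.singleton_append]
  rw [shAux, ← pairW_reverse_left p (w ++ [a])]
  simp

lemma deleteLast_shuffleBilin_single (a : Fin r) (w x : Word r) :
    deleteLast a (shuffleBilin p (Finsupp.single w 1) (Finsupp.single x 1)) =
      shuffleBilin p (deleteLast a (Finsupp.single w 1)) (Finsupp.single x 1) +
        shuffleBilin p (degreeScale p a (Finsupp.single w 1))
          (deleteLast a (Finsupp.single x 1)) := by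
  rcases List.eq_nil_or_concat' w with rfl | ⟨w, b, rfl⟩
  · simp [degreeScale_single, pairW]
  rcases List.eq_nil_or_concat' x with rfl | ⟨x, c, rfl⟩
  · simp
  simp only [shuffleBilin_concat_concat, map_add, map_smul, degreeScale_single,
    deleteLast_single_concat, LinearMap.smul_apply]
  congr 1
  · split_ifs with h
    · rw [h, deleteLast_mapDomain_append_self]
    · simp [deleteLast_mapDomain_append_of_ne h]
  · split_ifs with h
    · rw [h, deleteLast_mapDomain_append_self]
    · simp [deleteLast_mapDomain_append_of_ne h]

-- The defining recursion of the `q`-shuffle product, read as a twisted Leibniz rule.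
lemma deleteLast_shuffleBilin (a : Fin r) (f g : FA r) :
    deleteLast a (shuffleBilin p f g) =
      shuffleBilin p (deleteLast a f) g +
        shuffleBilin p (degreeScale p a f) (deleteLast a g) := by
  suffices h : (shuffleBilin p).compr₂ (deleteLast a) = shuffleBilin p ∘ₗ deleteLast a +
      (shuffleBilin p).compl₁₂ (degreeScale p a) (deleteLast a) from
    DFunLike.congr_fun (DFunLike.congr_fun h f) g
  refine LinearMap.ext_basis Finsupp.basisSingleOne Finsupp.basisSingleOne fun w x => ?_
  simpa using deleteLast_shuffleBilin_single p a w x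

lemma shuffleBilin_apply_nil (f g : FA r) : shuffleBilin p f g [] = f [] * g [] := by
  suffices h : (shuffleBilin p).compr₂ (Finsupp.lapply []) =
      (LinearMap.mul K K).compl₁₂ (Finsupp.lapply []) (Finsupp.lapply []) from
    DFunLike.congr_fun (DFunLike.congr_fun h f) g
  refine LinearMap.ext_basis Finsupp.basisSingleOne Finsupp.basisSingleOne fun w x => ?_
  rcases List.eq_nil_or_concat' w with rfl | ⟨w, b, rfl⟩
  · simp
  rcases List.eq_nil_or_concat' x with rfl | ⟨x, c, rfl⟩
  · simp
  simp [shuffleBilin_concat_concat, Finsupp.mapDomain_of_notMem_range]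

lemma degreeScale_shuffleBilin (a : Fin r) (f g : FA r) :
    degreeScale p a (shuffleBilin p f g) =
      shuffleBilin p (degreeScale p a f) (degreeScale p a g) := by
  ext u
  induction u using List.reverseRecOn generalizing f g with
  | nil => simp [shuffleBilin_apply_nil, pairW]
  | append_singleton u b ih =>
    simp only [← deleteLast_apply, deleteLast_shuffleBilin, deleteLast_degreeScale, map_add,
      map_smul, smul_add, LinearMap.smul_apply, Finsupp.add_apply, Finsupp.smul_apply, ih,
      degreeScale_comm p b a]

lemma shuffleBilin_assoc (f g h : FA r) :
    shuffleBilin p (shuffleBilin p f g) h = shuffleBilin p f (shuffleBilin p g h) := by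
  ext u
  induction u using List.reverseRecOn generalizing f g h with
  | nil => simp [shuffleBilin_apply_nil, mul_assoc]
  | append_singleton u b ih =>
    simp only [← deleteLast_apply, deleteLast_shuffleBilin, degreeScale_shuffleBilin, map_add,
      LinearMap.add_apply, Finsupp.add_apply, ih, add_assoc]

variable {p} in
lemma shuffleBilin_mem_wordComponent {μ ν : Multiset (Fin r)} {f g : FA r}
    (hf : f ∈ wordComponent K μ) (hg : g ∈ wordComponent K ν) :
    shuffleBilin p f g ∈ wordComponent K (μ + ν) := by
  refine mem_wordComponent_iff.2 fun u hu => ?_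
  induction u using List.reverseRecOn generalizing f g μ ν with
  | nil =>
    rw [shuffleBilin_apply_nil] at hu
    rw [← mem_wordComponent_iff.1 hf _ (left_ne_zero_of_mul hu),
      ← mem_wordComponent_iff.1 hg _ (right_ne_zero_of_mul hu)]
    rfl
  | append_singleton u a ih =>
    rw [← deleteLast_apply, deleteLast_shuffleBilin, Finsupp.add_apply] at hu
    rw [coe_append_singleton]
    by_cases h : shuffleBilin p (deleteLast a f) g u = 0
    · rw [h, zero_add] at hu
      have haν : a ∈ ν := mem_of_deleteLast_ne_zero hg fun h0 => hu (by simp [h0])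
      obtain ⟨ν, rfl⟩ := Multiset.exists_cons_of_mem haν
      rw [ih (degreeScale_mem_wordComponent a hf) (deleteLast_mem_wordComponent hg) hu,
        Multiset.add_cons]
    · have haμ : a ∈ μ := mem_of_deleteLast_ne_zero hf fun h0 => h (by simp [h0])
      obtain ⟨μ, rfl⟩ := Multiset.exists_cons_of_mem haμ
      rw [ih (deleteLast_mem_wordComponent hf) hg h, Multiset.cons_add]

/-- The set `𝒰` as a subspace of `F`. -/
def subspaceU : Submodule K (FA r) where
  carrier := {f | InU p f}
  add_mem' := InU.add
  zero_mem' := by simpa using InU.smul (p := p) 0 InU.one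
  smul_mem' s _ := InU.smul s

variable {p} in
lemma InU.shuffleBilin_mem {f g : FA r} (hf : InU p f) (hg : InU p g) :
    InU p (shuffleBilin p f g) := by
  rw [shuffleBilin_apply]
  exact hf.mul hg

variable {p} in
lemma InU.mem_span_homogeneous {f : FA r} (hf : InU p f) :
    f ∈ Submodule.span K {g | InU p g ∧ ∃ ν, g ∈ wordComponent K ν} := by
  induction hf with
  | letter i => exact Submodule.subset_span ⟨InU.letter i, _, single_mem_wordComponent _ _⟩
  | one => exact Submodule.subset_span ⟨InU.one, _, single_mem_wordComponent _ _⟩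
  | add _ _ hf hg => exact add_mem hf hg
  | smul s _ hf => exact Submodule.smul_mem _ s hf
  | mul _ _ hf hg =>
    have hfg := Submodule.apply_mem_map₂ (shuffleBilin p) hf hg
    rw [Submodule.map₂_span_span, shuffleBilin_apply] at hfg
    refine Submodule.span_mono ?_ hfg
    rintro _ ⟨f, ⟨hf, μ, hfμ⟩, g, ⟨hg, ν, hgν⟩, rfl⟩
    exact ⟨hf.shuffleBilin_mem hg, _, shuffleBilin_mem_wordComponent hfμ hgν⟩

end QShuffle

section Duality

variable (p : Fin r → Fin r → ℤ)

/-- The matrix of scalars `q ^ (-(α_i, α_j))`. -/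
def braiding (i j : Fin r) : K := qq ^ (-(p i j))

/-- The pairing `(ν, α_a)` of a degree, recorded as a multiset of letters, with a simple root. -/
def degreePairing (ν : Multiset (Fin r)) (a : Fin r) : ℤ := (ν.map fun i => p i a).sum

lemma pairW_singleton_right (u : Word r) (a : Fin r) :
    pairW p u [a] = degreePairing p (u : Multiset (Fin r)) a := by
  simp [pairW, degreePairing]

lemma deleteLast_letter (a b : Fin r) :
    deleteLast b (Finsupp.single [a] (1 : K)) = if b = a then Finsupp.single [] 1 else 0 :=
  deleteLast_single_concat b a [] 1

lemma wordPairing_shuffleBilin_letter_left (a : Fin r) (x : FreeAlgebra K (Fin r)) (f : FA r) :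
    wordPairing K (Fin r) x (shuffleBilin p (Finsupp.single [a] 1) f) =
      wordPairing K (Fin r) (rightDeriv (braiding p) a x) f := by
  induction x using induction_mul_ι generalizing f with
  | one => simp [wordPairing_one, shuffleBilin_apply_nil]
  | mul_ι x b ih =>
    rw [wordPairing_mul_ι, deleteLast_shuffleBilin, degreeScale_single, deleteLast_letter,
      pairW_singleton, rightDeriv_mul, rightDeriv_ι, diagHom_ι, mul_smul_comm, map_add, map_add,
      LinearMap.add_apply, map_smul, map_smul, LinearMap.smul_apply, LinearMap.smul_apply,
      map_smul, ih, wordPairing_mul_ι, add_comm, braiding]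
    split_ifs <;> simp
  | add x y hx hy => simp only [map_add, LinearMap.add_apply, hx, hy]
  | smul s x hx => simp only [map_smul, LinearMap.smul_apply, hx]

variable {p}

lemma wordPairing_degreeScale (hp : ∀ i j, p i j = p j i) (a : Fin r)
    (x : FreeAlgebra K (Fin r)) (f : FA r) :
    wordPairing K (Fin r) x (degreeScale p a f) =
      wordPairing K (Fin r) (diagHom (braiding p) a x) f := by
  induction x using induction_mul_ι generalizing f with
  | one => simp [wordPairing_one, pairW]
  | mul_ι x b ih =>
    rw [wordPairing_mul_ι, deleteLast_degreeScale, map_smul, ih, map_mul, diagHom_ι,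
      mul_smul_comm, map_smul, LinearMap.smul_apply, wordPairing_mul_ι, braiding, hp]
  | add x y hx hy => simp only [map_add, LinearMap.add_apply, hx, hy]
  | smul s x hx => simp only [map_smul, LinearMap.smul_apply, hx]

lemma wordPairing_shuffleBilin_letter_right (hp : ∀ i j, p i j = p j i) (a : Fin r)
    (x : FreeAlgebra K (Fin r)) (f : FA r) :
    wordPairing K (Fin r) x (shuffleBilin p f (Finsupp.single [a] 1)) =
      wordPairing K (Fin r) (leftDeriv (braiding p) a x) f := by
  induction x using induction_mul_ι generalizing f with
  | one => simp [wordPairing_one, shuffleBilin_apply_nil]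
  | mul_ι x b ih =>
    rw [wordPairing_mul_ι, deleteLast_shuffleBilin, deleteLast_letter, leftDeriv_mul,
      leftDeriv_ι, map_add, map_add, LinearMap.add_apply, ih, wordPairing_mul_ι]
    split_ifs with h <;> simp [h, wordPairing_degreeScale hp]
  | add x y hx hy => simp only [map_add, LinearMap.add_apply, hx, hy]
  | smul s x hx => simp only [map_smul, LinearMap.smul_apply, hx]

lemma IsHomogeneousOfDegree.rightDeriv {x : FreeAlgebra K (Fin r)} {a : Fin r}
    {ν : Multiset (Fin r)} (hx : IsHomogeneousOfDegree x (a ::ₘ ν)) :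
    IsHomogeneousOfDegree (rightDeriv (braiding p) a x) ν := by
  intro u hu
  rw [← wordPairing_shuffleBilin_letter_left]
  refine hx.wordPairing_eq_zero (shuffleBilin_mem_wordComponent (single_mem_wordComponent _ _)
    (single_mem_wordComponent _ _)) ?_
  simpa [← Multiset.cons_coe] using hu

lemma IsHomogeneousOfDegree.leftDeriv (hp : ∀ i j, p i j = p j i) {x : FreeAlgebra K (Fin r)}
    {a : Fin r} {ν : Multiset (Fin r)} (hx : IsHomogeneousOfDegree x (a ::ₘ ν)) :
    IsHomogeneousOfDegree (leftDeriv (braiding p) a x) ν := by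
  intro u hu
  rw [← wordPairing_shuffleBilin_letter_right hp]
  refine hx.wordPairing_eq_zero (shuffleBilin_mem_wordComponent (single_mem_wordComponent _ _)
    (single_mem_wordComponent _ _)) ?_
  rw [add_comm]
  simpa [← Multiset.cons_coe] using hu

lemma IsHomogeneousOfDegree.diagHom_eq_smul (hp : ∀ i j, p i j = p j i)
    {x : FreeAlgebra K (Fin r)} {ν : Multiset (Fin r)} (hx : IsHomogeneousOfDegree x ν)
    (a : Fin r) : diagHom (braiding p) a x = qq ^ (-(degreePairing p ν a)) • x := by
  refine ext_wordPairing fun u => ?_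
  rw [← wordPairing_degreeScale hp, degreeScale_single, map_smul, map_smul, LinearMap.smul_apply,
    pairW_singleton_right]
  rcases eq_or_ne (u : Multiset (Fin r)) ν with rfl | hu
  · rfl
  · simp [hx u hu]

lemma eq_zero_of_wordPairing_eq_zero_of_degree_zero {x : FreeAlgebra K (Fin r)}
    (hx : IsHomogeneousOfDegree x 0) (h : ∀ f, InU p f → wordPairing K (Fin r) x f = 0) :
    x = 0 := by
  refine ext_wordPairing fun u => ?_
  rw [map_zero, LinearMap.zero_apply]
  rcases u with _ | ⟨a, u⟩
  · exact h _ InU.one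
  · exact hx _ (by simp)

lemma wordPairing_functionalComponent_of_inU {φ : Module.Dual K (FA r)}
    (hφ : ∀ f, InU p f → φ f = 0) (ν : Multiset (Fin r)) {f : FA r} (hf : InU p f) :
    wordPairing K (Fin r) (functionalComponent φ ν) f = 0 := by
  refine (Submodule.span_le (p := LinearMap.ker (wordPairing K (Fin r) _))).2 ?_
    hf.mem_span_homogeneous
  rintro g ⟨hg, μ, hgμ⟩
  rcases eq_or_ne μ ν with rfl | hμν
  · exact (wordPairing_functionalComponent_of_mem φ hgμ).trans (hφ g hg)
  · exact (isHomogeneousOfDegree_functionalComponent φ ν).wordPairing_eq_zero hgμ hμν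

lemma InU.wordPairing_eq_zero {J : TwoSidedIdeal (FreeAlgebra K (Fin r))}
    (hR : ∀ a, ∀ x ∈ J, _root_.rightDeriv (braiding p) a x ∈ J)
    (hJ : ∀ x ∈ J, FreeAlgebra.algebraMapInv x = (0 : K)) {f : FA r} (hf : InU p f) :
    ∀ x ∈ J, wordPairing K (Fin r) x f = 0 := by
  suffices h : ∀ g, (∀ x ∈ J, wordPairing K (Fin r) x g = 0) →
      ∀ x ∈ J, wordPairing K (Fin r) x (shuffleBilin p f g) = 0 by
    rw [← shuffleBilin_one_right p f]
    exact h _ fun x hx => by rw [wordPairing_single_nil, hJ x hx, zero_mul]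
  induction hf with
  | letter a =>
    intro g hg x hx
    rw [wordPairing_shuffleBilin_letter_left]
    exact hg _ (hR a x hx)
  | one => simp
  | add _ _ hf hf' =>
    intro g hg x hx
    simp [hf g hg x hx, hf' g hg x hx]
  | smul s _ hf =>
    intro g hg x hx
    simp [hf g hg x hx]
  | mul _ _ hf hf' =>
    intro g hg
    rw [← shuffleBilin_apply, shuffleBilin_assoc]
    exact hf _ (hf' g hg)

end Duality

section QBinomial

lemma qq_zpow_ne_one {n : ℤ} (hn : n ≠ 0) : qq ^ n ≠ 1 := by
  have hpow (m : ℕ) (hm : m ≠ 0) : qq ^ m ≠ 1 := by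
    rw [qq, ← RatFunc.algebraMap_X, ← map_pow, ← map_one (algebraMap (Polynomial ℚ) K)]
    intro h
    simpa [hm] using congrArg Polynomial.natDegree (RatFunc.algebraMap_injective ℚ h)
  obtain ⟨m, rfl | rfl⟩ := n.eq_nat_or_neg
  · exact_mod_cast hpow m (by simpa using hn)
  · rw [zpow_neg, Ne, inv_eq_one]
    exact_mod_cast hpow m (by simpa using hn)

lemma qq_zpow_sub_zpow_neg_ne_zero {n : ℤ} (hn : n ≠ 0) : qq ^ n - qq ^ (-n) ≠ 0 := by
  intro h
  have hsq : qq ^ (n + n) = 1 := by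
    rw [zpow_add₀ qq_ne_zero, ← mul_inv_cancel₀ (zpow_ne_zero n qq_ne_zero), ← zpow_neg,
      sub_eq_zero.1 h]
  exact qq_zpow_ne_one (by lia) hsq

lemma qInt_zero (d : ℤ) : qInt d 0 = 0 := by simp [qInt]

lemma qInt_ne_zero {d n : ℤ} (hd : d ≠ 0) (hn : n ≠ 0) : qInt d n ≠ 0 :=
  div_ne_zero (qq_zpow_sub_zpow_neg_ne_zero (mul_ne_zero hd hn)) (qq_zpow_sub_zpow_neg_ne_zero hd)

lemma qInt_mul_zpow (d n l : ℤ) :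
    qInt d n * qq ^ (-(d * l)) = qInt d (n - l) + qq ^ (-(d * n)) * qInt d l := by
  simp only [qInt, div_mul_eq_mul_div, mul_div_assoc', ← add_div]
  congr 1
  simp only [sub_mul, mul_sub, ← zpow_add₀ qq_ne_zero]
  ring_nf

lemma qBinom_zero (d : ℤ) (n : ℕ) : qBinom d n 0 = 1 := by simp [qBinom]

lemma qBinom_self_succ (d : ℤ) (n : ℕ) : qBinom d n (n + 1) = 0 := by
  simp [qBinom, Finset.prod_range_succ, qInt_zero]

lemma qBinom_succ_right (d : ℤ) (n l : ℕ) :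
    qBinom d n (l + 1) = qInt d (n - l) / qInt d (l + 1) * qBinom d n l := by
  rw [qBinom, qBinom, Finset.prod_range_succ, Finset.prod_range_succ, mul_div_mul_comm, mul_comm]

lemma qBinom_succ_succ (d : ℤ) (n l : ℕ) :
    qBinom d (n + 1) (l + 1) = qInt d (n + 1) / qInt d (l + 1) * qBinom d n l := by
  rw [qBinom, qBinom, Finset.prod_range_succ',
    Finset.prod_range_succ (fun t : ℕ => qInt d ((t : ℤ) + 1)), mul_div_mul_comm, mul_comm]
  simp

lemma qBinom_pascal {d : ℤ} (hd : d ≠ 0) (n l : ℕ) :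
    qBinom d (n + 1) (l + 1) * qq ^ (-(d * (l + 1))) =
      qBinom d n (l + 1) + qq ^ (-(d * (n + 1))) * qBinom d n l := by
  have hl : qInt d (l + 1) ≠ 0 := qInt_ne_zero hd (by lia)
  have hq := qInt_mul_zpow d (n + 1) (l + 1)
  rw [add_sub_add_right_eq_sub] at hq
  rw [qBinom_succ_succ, qBinom_succ_right]
  field_simp
  linear_combination qBinom d n l * hq

-- The expansion of `F_i ^ n (ι j)` has an extra power of `q` in each coefficient, which is trivial
-- exactly for the Serre exponent `n = m + 1`.
lemma serreElt_braiding_eq_sum (p : Fin r → Fin r → ℤ) (i j : Fin r) {d : ℤ} (hd : d ≠ 0) (m : ℕ)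
    (hii : p i i = 2 * d) (hij : p i j = -(d * m)) :
    serreElt (braiding p) i j (m + 1) =
      ∑ l ∈ Finset.range (m + 1 + 1), ((-1) ^ l * qBinom d (m + 1) l) •
        (ι K i ^ l * ι K j * ι K i ^ (m + 1 - l)) := by
  let b (n l : ℕ) : K := (-1) ^ l * qBinom d n l * qq ^ (d * l * (m + 1 - n))
  have hb : ∀ l, b (m + 1) l = (-1) ^ l * qBinom d (m + 1) l := by simp [b]
  simp only [← hb]
  refine serreElt_eq_sum _ i j (by simp [b, qBinom_zero]) (by simp [b, qBinom_self_succ])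
    (fun n l => ?_) _
  have hpascal := qBinom_pascal hd n l
  have hleft : qq ^ (d * (l + 1 : ℕ) * (m + 1 - (n + 1 : ℕ))) =
      qq ^ (-(d * (l + 1))) * qq ^ (d * (l + 1 : ℕ) * (m + 1 - n)) := by
    rw [← zpow_add₀ qq_ne_zero]
    push_cast
    ring_nf
  have hright : braiding p i i ^ n * braiding p i j * qq ^ (d * l * (m + 1 - n)) =
      qq ^ (-(d * (n + 1))) * qq ^ (d * (l + 1 : ℕ) * (m + 1 - n)) := by
    rw [braiding, braiding, hii, hij, ← zpow_natCast, ← zpow_mul]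
    simp only [← zpow_add₀ qq_ne_zero]
    push_cast
    ring_nf
  simp only [b, hleft]
  linear_combination (-(-1) ^ l * qq ^ (d * (l + 1 : ℕ) * (m + 1 - n))) * hpascal +
    (-1) ^ l * qBinom d n l * hright

end QBinomial

section FiniteType

/-- `a` is a Cartan matrix of finite type, not necessarily indecomposable, symmetrized by the
positive integers `d`. -/
structure IsFiniteCartan (a : Fin r → Fin r → ℤ) (d : Fin r → ℤ) : Prop where
  diag : ∀ i, a i i = 2
  offdiag : ∀ i j, i ≠ j → a i j ≤ 0
  pos : ∀ i, 0 < d i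
  symm : ∀ i j, d i * a i j = d j * a j i
  posdef : ∀ v : Fin r → ℚ, v ≠ 0 → 0 < ∑ i, ∑ j, v i * v j * ((d i * a i j : ℤ) : ℚ)

/-- The symmetrized form `(α_i, α_j) = d_i a_{ij}` on simple roots. -/
def rootForm (a : Fin r → Fin r → ℤ) (d : Fin r → ℤ) (i j : Fin r) : ℤ := d i * a i j

/-- The exponents `-a_{ij}` of the quantum Serre relations for `i ≠ j`, natural numbers because
`a_{ij} ≤ 0` off the diagonal. -/
def serreExponent (a : Fin r → Fin r → ℤ) (i j : Fin r) : ℕ := (-a i j).toNat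

lemma sum_count_mul_degreePairing (p : Fin r → Fin r → ℤ) (ν : Multiset (Fin r)) :
    ∑ i, (ν.count i : ℤ) * degreePairing p ν i =
      ∑ i, ∑ j, (ν.count i : ℤ) * ν.count j * p j i := by
  refine Finset.sum_congr rfl fun i _ => ?_
  rw [degreePairing, Finset.sum_multiset_map_count, Finset.sum_subset (Finset.subset_univ _),
    Finset.mul_sum]
  · exact Finset.sum_congr rfl fun j _ => by rw [nsmul_eq_mul, mul_assoc]
  · intro j _ hj
    rw [Multiset.count_eq_zero.2 (by simpa using hj), zero_smul]

namespace IsFiniteCartan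

variable {a : Fin r → Fin r → ℤ} {d : Fin r → ℤ}

lemma rootForm_comm (h : IsFiniteCartan a d) (i j : Fin r) : rootForm a d i j = rootForm a d j i :=
  h.symm i j

lemma rootForm_self (h : IsFiniteCartan a d) (i : Fin r) : rootForm a d i i = 2 * d i := by
  rw [rootForm, h.diag, mul_comm]

lemma serreExponent_cast (h : IsFiniteCartan a d) {i j : Fin r} (hij : i ≠ j) :
    (serreExponent a i j : ℤ) = -a i j :=
  Int.toNat_of_nonneg (by linarith [h.offdiag i j hij])

lemma braiding_comm (h : IsFiniteCartan a d) (i j : Fin r) :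
    braiding (rootForm a d) i j = braiding (rootForm a d) j i := by
  rw [braiding, braiding, h.rootForm_comm]

lemma braiding_sq_mul_pow (h : IsFiniteCartan a d) (i j : Fin r) (hij : i ≠ j) :
    braiding (rootForm a d) i j ^ 2 * braiding (rootForm a d) i i ^ serreExponent a i j = 1 := by
  rw [braiding, braiding, ← zpow_natCast, ← zpow_natCast, ← zpow_mul, ← zpow_mul,
    ← zpow_add₀ qq_ne_zero, h.serreExponent_cast hij, h.rootForm_self, ← zpow_zero qq, rootForm]
  push_cast
  ring_nf

lemma braiding_self_pow_ne_one (h : IsFiniteCartan a d) (i : Fin r) (n : ℕ) :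
    braiding (rootForm a d) i i ^ (n + 1) ≠ 1 := by
  rw [braiding, h.rootForm_self, ← zpow_natCast, ← zpow_mul]
  have hd := h.pos i
  exact qq_zpow_ne_one (by push_cast; nlinarith)

lemma exists_mem_degreePairing_pos (h : IsFiniteCartan a d) {ν : Multiset (Fin r)} (hν : ν ≠ 0) :
    ∃ i ∈ ν, 0 < degreePairing (rootForm a d) ν i := by
  have hcount : (fun i => (ν.count i : ℚ)) ≠ 0 := fun h0 =>
    hν (Multiset.ext.2 fun i => by simpa using congrFun h0 i)
  have hpos : 0 < ∑ i, (ν.count i : ℤ) * degreePairing (rootForm a d) ν i := by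
    simp only [sum_count_mul_degreePairing, rootForm, fun i j => h.symm j i]
    exact_mod_cast h.posdef _ hcount
  by_contra! hle
  refine hpos.not_ge (Finset.sum_nonpos fun i _ => ?_)
  by_cases hi : i ∈ ν
  · exact mul_nonpos_of_nonneg_of_nonpos (by positivity) (hle i hi)
  · rw [Multiset.count_eq_zero.2 hi, Nat.cast_zero, zero_mul]

lemma wordPairing_eq_zero_of_mem_serreIdeal (h : IsFiniteCartan a d) {x : FreeAlgebra K (Fin r)}
    (hx : x ∈ serreIdeal (braiding (rootForm a d)) (serreExponent a)) {f : FA r}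
    (hf : InU (rootForm a d) f) : wordPairing K (Fin r) x f = 0 :=
  hf.wordPairing_eq_zero
    (fun l _ => rightDeriv_mem_serreIdeal h.braiding_comm h.braiding_sq_mul_pow l)
    (fun _ => algebraMapInv_eq_zero_of_mem_serreIdeal) x hx

lemma mem_serreIdeal_of_mem_radical (h : IsFiniteCartan a d) {ν : Multiset (Fin r)}
    {x : FreeAlgebra K (Fin r)} (hx : IsHomogeneousOfDegree x ν)
    (hrad : ∀ f, InU (rootForm a d) f → wordPairing K (Fin r) x f = 0) :
    x ∈ serreIdeal (braiding (rootForm a d)) (serreExponent a) := by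
  induction ν using Multiset.strongInductionOn generalizing x with
  | _ ν ih =>
  rcases eq_or_ne ν 0 with rfl | hν
  · rw [eq_zero_of_wordPairing_eq_zero_of_degree_zero hx hrad]
    exact zero_mem _
  obtain ⟨i, hi, hpos⟩ := h.exists_mem_degreePairing_pos hν
  obtain ⟨μ, rfl⟩ := Multiset.exists_cons_of_mem hi
  have hμ : μ < i ::ₘ μ := Multiset.lt_cons_self μ i
  have hLx : leftDeriv (braiding (rootForm a d)) i x ∈
      serreIdeal (braiding (rootForm a d)) (serreExponent a) :=
    ih μ hμ (hx.leftDeriv h.rootForm_comm) fun f hf => by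
      rw [← wordPairing_shuffleBilin_letter_right h.rootForm_comm]
      exact hrad _ (hf.shuffleBilin_mem (InU.letter i))
  have hRx : rightDeriv (braiding (rootForm a d)) i x ∈
      serreIdeal (braiding (rootForm a d)) (serreExponent a) :=
    ih μ hμ hx.rightDeriv fun f hf => by
      rw [← wordPairing_shuffleBilin_letter_left]
      exact hrad _ ((InU.letter i).shuffleBilin_mem hf)
  refine mem_serreIdeal_of_leftDeriv_mem_of_rightDeriv_mem h.braiding_comm h.braiding_sq_mul_pow
    (zpow_ne_zero _ qq_ne_zero) (h.braiding_self_pow_ne_one i)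
    (hx.diagHom_eq_smul h.rootForm_comm i) (fun n => ?_) hLx hRx
  rw [braiding, h.rootForm_self, ← zpow_natCast, ← zpow_natCast, ← zpow_mul, ← zpow_mul,
    ← zpow_add₀ qq_ne_zero]
  have hd := h.pos i
  exact qq_zpow_ne_one (by push_cast; nlinarith)

lemma wordPairing_serreElt (h : IsFiniteCartan a d) {i j : Fin r} (hij : i ≠ j) (z t : Word r)
    (f : FA r) :
    wordPairing K (Fin r) (wordBasis K (Fin r) z *
        serreElt (braiding (rootForm a d)) i j (serreExponent a i j + 1) *
          wordBasis K (Fin r) t) f =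
      ∑ k ∈ Finset.range ((1 - a i j).toNat + 1),
        (-1 : K) ^ k * qBinom (d i) ((1 - a i j).toNat) k *
          f (z ++ List.replicate k i ++ [j] ++ List.replicate ((1 - a i j).toNat - k) i ++ t) := by
  have hcast := h.serreExponent_cast hij
  have hm : (1 - a i j).toNat = serreExponent a i j + 1 := by lia
  have hform : rootForm a d i j = -(d i * serreExponent a i j) := by rw [hcast, rootForm]; ring
  rw [hm, serreElt_braiding_eq_sum _ i j (h.pos i).ne' _ (h.rootForm_self i) hform,
    Finset.mul_sum, Finset.sum_mul, map_sum, LinearMap.sum_apply]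
  refine Finset.sum_congr rfl fun l _ => ?_
  simp only [← wordPairing_wordBasis, wordBasis_append, wordBasis_replicate, wordBasis_singleton,
    mul_smul_comm, smul_mul_assoc, map_smul, LinearMap.smul_apply, smul_eq_mul, mul_assoc]

lemma inU_of_forall_mem_serreIdeal (h : IsFiniteCartan a d) {f : FA r}
    (hf : ∀ x ∈ serreIdeal (braiding (rootForm a d)) (serreExponent a),
      wordPairing K (Fin r) x f = 0) : InU (rootForm a d) f := by
  by_contra hfU
  obtain ⟨φ, hφf, hφ⟩ := Submodule.exists_le_ker_of_notMem
    (show f ∉ subspaceU (rootForm a d) from hfU)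
  refine hφf ((functional_eq_sum_functionalComponent φ f).trans
    (Finset.sum_eq_zero fun ν _ => hf _ ?_))
  exact h.mem_serreIdeal_of_mem_radical (isHomogeneousOfDegree_functionalComponent φ ν)
    fun g hg => wordPairing_functionalComponent_of_inU (fun _ hu => hφ hu) ν hg

lemma inU_iff_forall_mem_serreIdeal (h : IsFiniteCartan a d) {f : FA r} :
    InU (rootForm a d) f ↔ ∀ x ∈ serreIdeal (braiding (rootForm a d)) (serreExponent a),
      wordPairing K (Fin r) x f = 0 :=
  ⟨fun hf _ hx => h.wordPairing_eq_zero_of_mem_serreIdeal hx hf, h.inU_of_forall_mem_serreIdeal⟩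

end IsFiniteCartan

end FiniteType

theorem mem_U_iff_serre_relations_general {a : Fin r → Fin r → ℤ} {d : Fin r → ℤ}
    (h : IsFiniteCartan a d) (f : FA r) :
    InU (rootForm a d) f ↔
      ∀ (i j : Fin r), i ≠ j → ∀ z t : Word r,
        ∑ k ∈ Finset.range ((1 - a i j).toNat + 1),
          (-1 : K) ^ k * qBinom (d i) ((1 - a i j).toNat) k *
            f (z ++ List.replicate k i ++ [j]
                ++ List.replicate ((1 - a i j).toNat - k) i ++ t) = 0 := by
  rw [h.inU_iff_forall_mem_serreIdeal]
  constructor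
  · intro hf i j hij z t
    rw [← h.wordPairing_serreElt hij]
    exact hf _ (TwoSidedIdeal.mul_mem_right _ _ _
      (TwoSidedIdeal.mul_mem_left _ _ _ (serreElt_mem_serreIdeal hij)))
  · intro hf x hx
    refine wordPairing_eq_zero_of_mem_span ?_ hx
    rintro _ ⟨i, j, hij, rfl⟩ z t
    rw [h.wordPairing_serreElt hij]
    exact hf i j hij z t

lemma CartanData.isFiniteCartan (C : CartanData r) : IsFiniteCartan C.a C.d where
  diag := C.diag
  offdiag := C.offdiag
  pos i := by rcases C.dval i with hi | hi | hi <;> lia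
  symm := C.dsymm
  posdef := C.posdef

/-- Theorem 2.6: `f = Σ_w γ(w) w` belongs to `𝒰` if and only if for all `i ≠ j` and all
words `z, t` : `Σ_{k=0}^{1−a_{ij}} (−1)^k [1−a_{ij} choose k]_i γ(z w_i^k w_j w_i^{1−a_{ij}−k} t) = 0`. -/
theorem mem_U_iff_serre_relations {r : ℕ} (hr : 1 ≤ r) (C : CartanData r) (f : FA r) :
    InU C.p f ↔
      ∀ (i j : Fin r), i ≠ j → ∀ z t : Word r,
        ∑ k ∈ Finset.range ((1 - C.a i j).toNat + 1),
          (-1 : K) ^ k * qBinom (C.d i) ((1 - C.a i j).toNat) k *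
            f (z ++ List.replicate k i ++ [j]
                ++ List.replicate ((1 - C.a i j).toNat - k) i ++ t) = 0 := by
  exact mem_U_iff_serre_relations_general C.isFiniteCartan f
end
end

section
/- If l is a good Lyndon word and g is a good word with g ≤ l lexicographically, then the concatenation l·g is a good word. -/
open scoped BigOperators

noncomputable section

variable {r : ℕ}

/-- The degree of a word in `Q⁺`, recorded as the multiplicity of each simple root. -/
def deg (w : Word r) : Fin r → ℕ := fun i => w.count i

/-- `f` is homogeneous of degree `ν`. -/
def Homog (f : FA r) (ν : Fin r → ℕ) : Prop := ∀ w ∈ f.support, deg w = ν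

/-- Lexicographic order on words (a proper left factor is smaller than the word). -/
def wlt (w x : Word r) : Prop := List.Lex (· < ·) w x

def wle (w x : Word r) : Prop := wlt w x ∨ w = x

/-- `g` is the lexicographically largest word occurring (with nonzero coefficient) in `f`. -/
def IsMaxWord (f : FA r) (g : Word r) : Prop :=
  f g ≠ 0 ∧ ∀ w ∈ f.support, wle w g

/-- Good words: words of the form `max(u)` for a nonzero homogeneous `u ∈ 𝒰`. -/
def IsGood (p : Fin r → Fin r → ℤ) (g : Word r) : Prop :=
  ∃ u : FA r, InU p u ∧ (∃ ν, Homog u ν) ∧ IsMaxWord u g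

/-- Lyndon words: nonempty words smaller than all their proper nonempty right factors. -/
def IsLyndon (l : Word r) : Prop :=
  l ≠ [] ∧ ∀ u v : Word r, l = u ++ v → u ≠ [] → v ≠ [] → wlt l v

/-!
Let `u, v ∈ 𝒰` be homogeneous with `max u = l` and `max v = g`; then `max (u * v) = l·g`. The words
of `u * v` are shuffles of a word `w ≤ l` with a word `x ≤ g`, of the same lengths as `l` and `g`.
Enlarging a factor strictly enlarges some shuffle, so all of them are bounded by shuffles of `l`
and `g`, strictly so unless `(w, x) = (l, g)`. Since `g` is at most every nonempty suffix of `l`, no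
shuffle of `l` and `g` exceeds `l·g`. Hence `l·g` comes from `l * g` alone, where its coefficient
is a nonempty sum of powers of `q`, which does not vanish because it is positive once `q` is
specialised to a positive transcendental real.
-/

/-! ### Shuffles of words -/

section Shuffles

variable {α : Type*}

/-- `IsShuffle u v z`: the word `z` is a shuffle of `u` and `v`, that is, an interleaving of their
letters that preserves the order within each. Shuffles are built here from the left, which suits the
lexicographic order, whereas `shAux` builds them from the right. -/
inductive IsShuffle : List α → List α → List α → Prop
  | nil : IsShuffle [] [] []
  | cons_left (a : α) {u v z : List α} : IsShuffle u v z → IsShuffle (a :: u) v (a :: z)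
  | cons_right (a : α) {u v z : List α} : IsShuffle u v z → IsShuffle u (a :: v) (a :: z)

namespace IsShuffle

variable {u v z : List α}

theorem symm (h : IsShuffle u v z) : IsShuffle v u z := by
  induction h with
  | nil => exact nil
  | cons_left a _ ih => exact ih.cons_right a
  | cons_right a _ ih => exact ih.cons_left a

theorem nil_left (v : List α) : IsShuffle [] v v := by
  induction v with
  | nil => exact nil
  | cons a _ ih => exact ih.cons_right a

theorem append (u v : List α) : IsShuffle u v (u ++ v) := by
  induction u with
  | nil => exact nil_left v
  | cons a _ ih => exact ih.cons_left a

theorem append_singleton_left (h : IsShuffle u v z) (a : α) :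
    IsShuffle (u ++ [a]) v (z ++ [a]) := by
  induction h with
  | nil => exact nil.cons_left a
  | cons_left b _ ih => exact ih.cons_left b
  | cons_right b _ ih => exact ih.cons_right b

theorem append_singleton_right (h : IsShuffle u v z) (a : α) :
    IsShuffle u (v ++ [a]) (z ++ [a]) :=
  (h.symm.append_singleton_left a).symm

theorem perm (h : IsShuffle u v z) : z.Perm (u ++ v) := by
  induction h with
  | nil => exact .nil
  | cons_left a _ ih => exact ih.cons a
  | cons_right a _ ih => exact (ih.cons a).trans List.perm_middle.symm

theorem eq_of_nil_left (h : IsShuffle [] v z) : z = v := by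
  induction v generalizing z with
  | nil => cases h; rfl
  | cons a _ ih => cases h with | cons_right _ h => rw [ih h]

end IsShuffle

end Shuffles

/-! ### Lexicographically large shuffles -/

section Lex

variable {α : Type*} [LinearOrder α]

theorem cons_le_cons_iff_lt_or_eq {a b : α} {u v : List α} :
    a :: u ≤ b :: v ↔ a < b ∨ a = b ∧ u ≤ v := by
  simp only [le_iff_lt_or_eq, List.cons_lt_cons_iff, List.cons.injEq]
  tauto

theorem cons_lt_cons_of_lt {a b : α} (h : a < b) (u v : List α) : a :: u < b :: v :=
  List.cons_lt_cons_iff.2 (.inl h)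

namespace IsShuffle

variable {u u' v v' z : List α}

theorem exists_lt_of_lt_left (h : IsShuffle u v z) (hlen : u.length = u'.length) (hlt : u < u') :
    ∃ z', IsShuffle u' v z' ∧ z < z' := by
  induction h generalizing u' with
  | nil => simp [List.length_eq_zero_iff.1 hlen.symm] at hlt
  | cons_left a _ ih =>
    obtain _ | ⟨a', t⟩ := u'
    · simp at hlen
    obtain ha | ⟨rfl, ht⟩ := List.cons_lt_cons_iff.1 hlt
    · exact ⟨_, append _ _, cons_lt_cons_of_lt ha _ _⟩
    · obtain ⟨z', hz', hzz'⟩ := ih (Nat.succ.inj hlen) ht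
      exact ⟨_, hz'.cons_left a, List.cons_lt_cons_self.2 hzz'⟩
  | cons_right b _ ih =>
    obtain ⟨z', hz', hzz'⟩ := ih hlen hlt
    exact ⟨_, hz'.cons_right b, List.cons_lt_cons_self.2 hzz'⟩

theorem exists_le_of_le_left (h : IsShuffle u v z) (hlen : u.length = u'.length) (hle : u ≤ u') :
    ∃ z', IsShuffle u' v z' ∧ z ≤ z' := by
  obtain rfl | hlt := hle.eq_or_lt
  · exact ⟨z, h, le_rfl⟩
  · obtain ⟨z', hz', hzz'⟩ := h.exists_lt_of_lt_left hlen hlt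
    exact ⟨z', hz', hzz'.le⟩

theorem exists_lt_of_prod_lt (h : IsShuffle u v z) (hu : u.length = u'.length)
    (hv : v.length = v'.length) (hlt : (u, v) < (u', v')) :
    ∃ z', IsShuffle u' v' z' ∧ z < z' := by
  obtain ⟨hltu, hlev⟩ | ⟨hleu, hltv⟩ := Prod.mk_lt_mk.1 hlt
  · obtain ⟨y, hy, hzy⟩ := h.exists_lt_of_lt_left hu hltu
    obtain ⟨z', hz', hyz'⟩ := hy.symm.exists_le_of_le_left hv hlev
    exact ⟨z', hz'.symm, hzy.trans_le hyz'⟩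
  · obtain ⟨y, hy, hzy⟩ := h.exists_le_of_le_left hu hleu
    obtain ⟨z', hz', hyz'⟩ := hy.symm.exists_lt_of_lt_left hv hltv
    exact ⟨z', hz'.symm, hzy.trans_lt hyz'⟩

theorem exists_le_of_move_prefix {c : List α} (h : IsShuffle (c ++ u) v z) (hvu : v ≤ u) :
    ∃ z', IsShuffle u (c ++ v) z' ∧ z ≤ z' := by
  induction z generalizing c u v with
  | nil =>
    generalize hw : c ++ u = w at h
    cases h
    obtain ⟨rfl, rfl⟩ := List.append_eq_nil_iff.1 hw
    exact ⟨[], nil, le_rfl⟩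
  | cons e z ih =>
    obtain _ | ⟨a, c⟩ := c
    · exact ⟨_, h, le_rfl⟩
    cases h with
    | cons_left _ h =>
      obtain ⟨z', hz', hzz'⟩ := ih h hvu
      exact ⟨_, hz'.cons_right _, List.cons_le_cons _ hzz'⟩
    | @cons_right _ _ v _ h =>
      obtain _ | ⟨d, u⟩ := u
      · exact absurd hvu (List.nil_lt_cons _ _).not_ge
      obtain hed | ⟨rfl, hvu_tail⟩ := cons_le_cons_iff_lt_or_eq.1 hvu
      · exact ⟨_, append _ _, (cons_lt_cons_of_lt hed _ _).le⟩
      · -- Equal heads cancel: the `e` at the end of the enlarged prefix is the head of the old `u`.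
        have h' : IsShuffle ((a :: c ++ [e]) ++ u) v z := by simpa using h
        obtain ⟨z', hz', hzz'⟩ := ih h' hvu_tail
        exact ⟨_, .cons_left e (by simpa using hz'), List.cons_le_cons _ hzz'⟩

theorem le_append_of_le_suffix (h : IsShuffle u v z)
    (hsuffix : ∀ t, t <:+ u → t ≠ [] → v ≤ t) : z ≤ u ++ v := by
  induction u generalizing z with
  | nil => exact h.eq_of_nil_left.le
  | cons a u ih =>
    have hsuffix_tail : ∀ t, t <:+ u → t ≠ [] → v ≤ t :=
      fun t ht => hsuffix t (ht.trans (List.suffix_cons a u))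
    cases h with
    | cons_left _ h => exact List.cons_le_cons a (ih h hsuffix_tail)
    | @cons_right b _ v z h =>
      obtain hba | ⟨rfl, hvu⟩ :=
        cons_le_cons_iff_lt_or_eq.1 (hsuffix _ List.suffix_rfl (List.cons_ne_nil _ _))
      · exact (cons_lt_cons_of_lt hba _ _).le
      · obtain ⟨z', hz', hzz'⟩ := exists_le_of_move_prefix (c := [b]) h hvu
        exact List.cons_le_cons b (hzz'.trans (ih hz' hsuffix_tail))

theorem lt_append_of_prod_lt (h : IsShuffle u v z) (hu : u.length = u'.length)
    (hv : v.length = v'.length) (hlt : (u, v) < (u', v'))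
    (hsuffix : ∀ t, t <:+ u' → t ≠ [] → v' ≤ t) : z < u' ++ v' := by
  obtain ⟨z', hz', hzz'⟩ := h.exists_lt_of_prod_lt hu hv hlt
  exact hzz'.trans_le (hz'.le_append_of_le_suffix hsuffix)

end IsShuffle

end Lex

theorem wle_iff_le {w x : Word r} : wle w x ↔ w ≤ x :=
  (le_iff_lt_or_eq (α := Word r)).symm

theorem IsLyndon.le_of_suffix {l t : Word r} (hl : IsLyndon l) (ht : t <:+ l) (hne : t ≠ []) :
    l ≤ t := by
  obtain ⟨_ | ⟨a, s⟩, rfl⟩ := ht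
  · exact le_rfl
  · exact wle_iff_le.1 (.inl (hl.2 _ _ rfl (List.cons_ne_nil _ _) hne))

/-! ### Coefficients of the q-shuffle product -/

theorem isShuffle_of_mem_support_shAux {p : Fin r → Fin r → ℤ} {w x z : Word r}
    (hz : z ∈ (shAux p w x).support) : IsShuffle w.reverse x.reverse z := by
  induction w, x using shAux.induct generalizing z with
  | case1 x =>
    rw [shAux] at hz
    rw [Finset.mem_singleton.1 (Finsupp.support_single_subset hz)]
    exact .nil_left _
  | case2 w hw =>
    rw [shAux.eq_2 _ _ hw] at hz
    rw [Finset.mem_singleton.1 (Finsupp.support_single_subset hz)]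
    exact (IsShuffle.nil_left _).symm
  | case3 a w b x ih_left ih_right =>
    rw [shAux] at hz
    obtain hz | hz := Finset.mem_union.1 (Finsupp.support_add hz)
    · obtain ⟨y, hy, rfl⟩ := Finset.mem_image.1 (Finsupp.mapDomain_support hz)
      rw [List.reverse_cons]
      exact (ih_left hy).append_singleton_left a
    · obtain ⟨y, hy, rfl⟩ :=
        Finset.mem_image.1 (Finsupp.mapDomain_support (Finsupp.support_smul hz))
      rw [List.reverse_cons (a := b)]
      exact (ih_right hy).append_singleton_right b

theorem map_mapDomain_nonneg {ι κ M N : Type*} [AddCommMonoid M] [AddCommMonoid N] [Preorder N]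
    [AddLeftMono N] (φ : M →+ N) {f : ι →₀ M} (hf : ∀ i, 0 ≤ φ (f i)) (e : ι → κ) (k : κ) :
    0 ≤ φ (f.mapDomain e k) := by
  classical
  rw [Finsupp.mapDomain, Finsupp.sum_apply, Finsupp.sum, map_sum]
  refine Finset.sum_nonneg fun i _ => ?_
  rw [Finsupp.single_apply]
  split_ifs
  · exact hf i
  · exact (map_zero φ).ge

theorem map_single_one_nonneg {ι S R : Type*} [Semiring S] [Semiring R] [PartialOrder R]
    [IsOrderedRing R] (φ : S →+* R) (i j : ι) : 0 ≤ φ (Finsupp.single i 1 j) := by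
  classical
  rw [Finsupp.single_apply]
  split_ifs <;> simp

section Positivity

variable {R : Type*} [Field R] [LinearOrder R] [IsStrictOrderedRing R] {φ : K →+* R}

theorem map_shAux_nonneg (hφ : 0 < φ qq) (p : Fin r → Fin r → ℤ) (w x z : Word r) :
    0 ≤ φ (shAux p w x z) := by
  induction w, x using shAux.induct generalizing z with
  | case1 x => rw [shAux]; exact map_single_one_nonneg φ _ _
  | case2 w hw => rw [shAux.eq_2 _ _ hw]; exact map_single_one_nonneg φ _ _
  | case3 a w b x ih_left ih_right =>
    rw [shAux, Finsupp.add_apply, Finsupp.smul_apply, smul_eq_mul, map_add, map_mul, map_zpow₀]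
    exact add_nonneg (map_mapDomain_nonneg φ.toAddMonoidHom ih_left _ _)
      (mul_nonneg (zpow_nonneg hφ.le _) (map_mapDomain_nonneg φ.toAddMonoidHom ih_right _ _))

theorem map_shAux_append_pos (hφ : 0 < φ qq) (p : Fin r → Fin r → ℤ) (w x : Word r) :
    0 < φ (shAux p w x (w.reverse ++ x.reverse)) := by
  induction w, x using shAux.induct with
  | case1 x => simp [shAux]
  | case2 w hw => simp [shAux.eq_2 _ _ hw]
  | case3 a w b x _ ih =>
    have happend : (a :: w).reverse ++ (b :: x).reverse =
        ((a :: w).reverse ++ x.reverse) ++ [b] := by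
      rw [List.reverse_cons (a := b), List.append_assoc]
    rw [shAux, Finsupp.add_apply, Finsupp.smul_apply, smul_eq_mul, map_add, map_mul, map_zpow₀]
    refine add_pos_of_nonneg_of_pos
      (map_mapDomain_nonneg φ.toAddMonoidHom (map_shAux_nonneg hφ p w (b :: x)) _ _)
      (mul_pos (zpow_pos hφ _) ?_)
    rw [happend, Finsupp.mapDomain_apply (List.append_left_injective [b])]
    exact ih

end Positivity

theorem exists_ringHom_real_map_qq_pos : ∃ φ : K →+* ℝ, 0 < φ qq := by
  have htrans : Transcendental ℚ (liouvilleNumber (2 : ℕ)) := fun halg =>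
    transcendental_liouvilleNumber le_rfl ((IsFractionRing.isAlgebraic_iff ℤ ℚ ℝ).2 halg)
  have hne : liouvilleNumber (2 : ℕ) ≠ 0 := fun h => htrans (h ▸ isAlgebraic_zero)
  have hpos : 0 < liouvilleNumber (2 : ℕ) := (tsum_nonneg fun _ => by positivity).lt_of_ne' hne
  let ev : Polynomial ℚ →+* ℝ := (Polynomial.aeval (R := ℚ) (liouvilleNumber (2 : ℕ))).toRingHom
  have hev : Function.Injective ev := transcendental_iff_injective.1 htrans
  refine ⟨RatFunc.liftRingHom ev (nonZeroDivisors_le_comap_nonZeroDivisors_of_injective ev hev), ?_⟩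
  rw [RatFunc.liftRingHom_X]
  exact hpos.trans_eq (Polynomial.aeval_X _).symm

theorem shAux_append_ne_zero (p : Fin r → Fin r → ℤ) (w x : Word r) :
    shAux p w x (w.reverse ++ x.reverse) ≠ 0 := by
  obtain ⟨φ, hφ⟩ := exists_ringHom_real_map_qq_pos
  exact ne_zero_of_map (map_shAux_append_pos hφ p w x).ne'

theorem shuffle_apply (p : Fin r → Fin r → ℤ) (f g : FA r) (z : Word r) :
    shuffle p f g z =
      ∑ w ∈ f.support, ∑ x ∈ g.support, f w * g x * shAux p w.reverse x.reverse z := by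
  simp only [shuffle, Finsupp.sum, Finsupp.finsetSum_apply, Finsupp.smul_apply, smul_eq_mul]

theorem exists_isShuffle_of_mem_support_shuffle {p : Fin r → Fin r → ℤ} {f g : FA r} {z : Word r}
    (hz : z ∈ (shuffle p f g).support) : ∃ w ∈ f.support, ∃ x ∈ g.support, IsShuffle w x z := by
  rw [Finsupp.mem_support_iff, shuffle_apply] at hz
  obtain ⟨w, hw, hz⟩ := Finset.exists_ne_zero_of_sum_ne_zero hz
  obtain ⟨x, hx, hz⟩ := Finset.exists_ne_zero_of_sum_ne_zero hz
  have hsh := isShuffle_of_mem_support_shAux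
    (Finsupp.mem_support_iff.2 (right_ne_zero_of_mul hz))
  rw [List.reverse_reverse, List.reverse_reverse] at hsh
  exact ⟨w, hw, x, hx, hsh⟩

/-! ### Maximal words of q-shuffle products -/

theorem IsShuffle.deg_eq {w x z : Word r} (h : IsShuffle w x z) : deg z = deg w + deg x := by
  funext i
  simp only [deg, Pi.add_apply, h.perm.count_eq, List.count_append]

theorem Homog.shuffle {p : Fin r → Fin r → ℤ} {f g : FA r} {μ ν : Fin r → ℕ} (hf : Homog f μ)
    (hg : Homog g ν) : Homog (shuffle p f g) (μ + ν) := by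
  intro z hz
  obtain ⟨w, hw, x, hx, hsh⟩ := exists_isShuffle_of_mem_support_shuffle hz
  rw [hsh.deg_eq, hf w hw, hg x hx]

theorem Homog.length_eq {f : FA r} {ν : Fin r → ℕ} (hf : Homog f ν) {w x : Word r}
    (hw : w ∈ f.support) (hx : x ∈ f.support) : w.length = x.length :=
  (List.perm_iff_count.2 (congrFun ((hf w hw).trans (hf x hx).symm))).length_eq

theorem IsMaxWord.mem_support {f : FA r} {l : Word r} (h : IsMaxWord f l) : l ∈ f.support :=
  Finsupp.mem_support_iff.2 h.1

section MaxWord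

variable {p : Fin r → Fin r → ℤ} {f f' : FA r} {l g : Word r}

theorem shuffle_apply_append_of_forall_isShuffle (hl : l ∈ f.support) (hg : g ∈ f'.support)
    (hunique : ∀ w ∈ f.support, ∀ x ∈ f'.support, IsShuffle w x (l ++ g) → w = l ∧ x = g) :
    shuffle p f f' (l ++ g) = f l * f' g * shAux p l.reverse g.reverse (l ++ g) := by
  have hzero : ∀ w ∈ f.support, ∀ x ∈ f'.support, ¬ (w = l ∧ x = g) →
      f w * f' x * shAux p w.reverse x.reverse (l ++ g) = 0 := by
    intro w hw x hx hne
    contrapose! hne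
    refine hunique w hw x hx ?_
    simpa only [List.reverse_reverse] using
      isShuffle_of_mem_support_shAux (Finsupp.mem_support_iff.2 (right_ne_zero_of_mul hne))
  rw [shuffle_apply, Finset.sum_eq_single_of_mem l hl, Finset.sum_eq_single_of_mem g hg]
  · exact fun x hx hne => hzero l hl x hx fun h => hne h.2
  · exact fun w hw hne => Finset.sum_eq_zero fun x hx => hzero w hw x hx fun h => hne h.1

theorem IsMaxWord.shuffle {μ ν : Fin r → ℕ} (hf : Homog f μ) (hf' : Homog f' ν)
    (hl : IsMaxWord f l) (hg : IsMaxWord f' g) (hsuffix : ∀ t, t <:+ l → t ≠ [] → g ≤ t) :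
    IsMaxWord (shuffle p f f') (l ++ g) := by
  have hlt : ∀ w ∈ f.support, ∀ x ∈ f'.support, ∀ z, IsShuffle w x z → (w, x) ≠ (l, g) →
      z < l ++ g := by
    intro w hw x hx z hsh hne
    have hle : (w, x) ≤ (l, g) := ⟨wle_iff_le.1 (hl.2 w hw), wle_iff_le.1 (hg.2 x hx)⟩
    exact hsh.lt_append_of_prod_lt (hf.length_eq hw hl.mem_support)
      (hf'.length_eq hx hg.mem_support) (hle.lt_of_ne hne) hsuffix
  refine ⟨?_, fun z hz => wle_iff_le.2 ?_⟩
  · have hunique : ∀ w ∈ f.support, ∀ x ∈ f'.support,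
        IsShuffle w x (l ++ g) → w = l ∧ x = g := fun w hw x hx hsh =>
      Prod.mk.inj (by_contra fun hne => (hlt w hw x hx _ hsh hne).false)
    have hcoeff : shAux p l.reverse g.reverse (l ++ g) ≠ 0 := by
      simpa only [List.reverse_reverse] using shAux_append_ne_zero p l.reverse g.reverse
    rw [shuffle_apply_append_of_forall_isShuffle hl.mem_support hg.mem_support hunique]
    exact mul_ne_zero (mul_ne_zero hl.1 hg.1) hcoeff
  · obtain ⟨w, hw, x, hx, hsh⟩ := exists_isShuffle_of_mem_support_shuffle hz
    by_cases heq : (w, x) = (l, g)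
    · obtain ⟨rfl, rfl⟩ := Prod.mk.inj heq
      exact hsh.le_append_of_le_suffix hsuffix
    · exact (hlt w hw x hx z hsh heq).le

end MaxWord

theorem good_lyndon_concat_good_general {p : Fin r → Fin r → ℤ} {l g : Word r} (hl : IsGood p l)
    (hg : IsGood p g) (hsuffix : ∀ t, t <:+ l → t ≠ [] → g ≤ t) : IsGood p (l ++ g) := by
  obtain ⟨u, hu, ⟨μ, hμ⟩, hul⟩ := hl
  obtain ⟨v, hv, ⟨ν, hν⟩, hvg⟩ := hg
  exact ⟨shuffle p u v, hu.mul hv, ⟨μ + ν, hμ.shuffle hν⟩, .shuffle hμ hν hul hvg hsuffix⟩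

/-- Proposition 3.5: if `l` is a good Lyndon word and `g` a good word with `g ≤ l`,
then `l·g` is a good word. -/
theorem good_lyndon_concat_good {r : ℕ} (hr : 1 ≤ r) (C : CartanData r)
    (l g : Word r) (hlG : IsGood C.p l) (hlL : IsLyndon l)
    (hg : IsGood C.p g) (hle : wle g l) :
    IsGood C.p (l ++ g) :=
  good_lyndon_concat_good_general hlG hg fun _ ht hne =>
    (wle_iff_le.1 hle).trans (hlL.le_of_suffix ht hne)
end
end
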